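/- arXiv:1704.07111 — 3 statements merged into one kernel-verified Lean document; each statement's English description precedes it below -/
import Mathlib

section
/- Let G be a connected graph and T ⊆ V(G). Then exactly one of the following three alternatives holds: (A) G contains a T'-join for every T' ⊆ V(G) with T △ T' finite; (B) for every T' ⊆ V(G) with T △ T' finite, G contains a T'-join if |T △ T'| is even and does not contain a T'-join if |T △ T'| is odd; (C) for every T' ⊆ V(G) with T △ T' finite, G contains a T'-join if |T △ T'| is odd and does not contain a T'-join if |T △ T'| is even. -/
namespace SimpleGraph

variable {V : Type*}

/-- A `T`-join in `G`: a set `P` of (oriented) paths, pairwise edge-disjoint, each with two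
distinct endpoints lying in `T`, such that every vertex of `T` is an endpoint of exactly one
path of `P`. -/
def IsTJoin (G : SimpleGraph V) (T : Set V) (P : Set (Σ u : V, Σ v : V, G.Walk u v)) : Prop :=
  (∀ p ∈ P, p.2.2.IsPath ∧ p.1 ≠ p.2.1 ∧ p.1 ∈ T ∧ p.2.1 ∈ T) ∧
  (∀ p ∈ P, ∀ q ∈ P, p ≠ q → ∀ e ∈ p.2.2.edges, e ∉ q.2.2.edges) ∧
  (∀ t ∈ T, ∃! p, p ∈ P ∧ (p.1 = t ∨ p.2.1 = t))

/-- `G` contains a `T`-join. -/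
def HasTJoin (G : SimpleGraph V) (T : Set V) : Prop := ∃ P, G.IsTJoin T P

end SimpleGraph

namespace SimpleGraph

variable {V : Type*}

/-- Case (A): `G` contains a `T'`-join whenever `T △ T'` is finite. -/
def CaseA (G : SimpleGraph V) (T : Set V) : Prop :=
  ∀ T' : Set V, (symmDiff T T').Finite → G.HasTJoin T'

/-- Case (B): for finite `T △ T'`, `G` contains a `T'`-join if `|T △ T'|` is even and does
not contain one if `|T △ T'|` is odd. -/
def CaseB (G : SimpleGraph V) (T : Set V) : Prop :=
  ∀ T' : Set V, (symmDiff T T').Finite →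
    ((Even (symmDiff T T').ncard → G.HasTJoin T') ∧
     (Odd (symmDiff T T').ncard → ¬ G.HasTJoin T'))

/-- Case (C): for finite `T △ T'`, `G` contains a `T'`-join if `|T △ T'|` is odd and does
not contain one if `|T △ T'|` is even. -/
def CaseC (G : SimpleGraph V) (T : Set V) : Prop :=
  ∀ T' : Set V, (symmDiff T T').Finite →
    ((Odd (symmDiff T T').ncard → G.HasTJoin T') ∧
     (Even (symmDiff T T').ncard → ¬ G.HasTJoin T'))

end SimpleGraph


namespace TJ
open SimpleGraph
open scoped symmDiff

variable {V : Type*}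

/-- vertices of odd degree in a finite edge set -/
noncomputable def oddSet (F : Finset (Sym2 V)) : Set V := by
  classical exact {v | Odd (F.filter (fun e => v ∈ e)).card}

theorem mem_oddSet [DecidableEq V] (F : Finset (Sym2 V)) (v : V) :
    v ∈ oddSet F ↔ Odd (F.filter (fun e => v ∈ e)).card := by
  unfold oddSet
  simp only [Set.mem_ofPred_eq]
  convert Iff.rfl

theorem odd_card_symmDiff {α : Type*} [DecidableEq α] (A B : Finset α) :
    Odd (symmDiff A B).card ↔ ¬ (Odd A.card ↔ Odd B.card) := by
  have h1 : (symmDiff A B).card = (A \ B).card + (B \ A).card := by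
    rw [symmDiff_def, Finset.sup_eq_union, Finset.card_union_of_disjoint]
    exact disjoint_sdiff_sdiff
  have h2 := Finset.card_sdiff_add_card_inter A B
  have h3 := Finset.card_sdiff_add_card_inter B A
  rw [Finset.inter_comm] at h3
  rw [h1, ← h2, ← h3]
  simp only [Nat.odd_iff]
  omega

theorem oddSet_symmDiff [DecidableEq V] (A B : Finset (Sym2 V)) :
    oddSet (symmDiff A B) = symmDiff (oddSet A) (oddSet B) := by
  ext v
  rw [Set.mem_symmDiff, mem_oddSet, mem_oddSet, mem_oddSet]
  have : (symmDiff A B).filter (fun e => v ∈ e)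
      = symmDiff (A.filter (fun e => v ∈ e)) (B.filter (fun e => v ∈ e)) := by
    ext e; simp only [Finset.mem_filter, Finset.mem_symmDiff]; tauto
  rw [this, odd_card_symmDiff]; tauto

theorem oddSet_empty : oddSet (∅ : Finset (Sym2 V)) = ∅ := by
  classical
  ext v; rw [mem_oddSet]; simp

theorem oddSet_path [DecidableEq V] {G : SimpleGraph V} {u v : V} (p : G.Walk u v)
    (hp : p.IsPath) (huv : u ≠ v) : oddSet p.edges.toFinset = {u, v} := by
  ext x
  rw [mem_oddSet]
  have h := hp.isTrail.even_countP_edges_iff x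
  have hc : (p.edges.toFinset.filter (fun e => x ∈ e)).card
      = p.edges.countP (fun e => x ∈ e) := by
    rw [List.countP_eq_length_filter,
      ← List.toFinset_card_of_nodup ((hp.isTrail.edges_nodup).filter _), List.toFinset_filter]
    simp
  rw [hc, ← Nat.not_even_iff_odd, h]
  simp only [Set.mem_insert_iff, Set.mem_singleton_iff]
  tauto

theorem oddSet_edge [DecidableEq V] (x z : V) :
    oddSet ({s(x, z)} : Finset (Sym2 V)) = {x, z} := by
  ext v
  rw [mem_oddSet, Finset.filter_singleton]
  split_ifs with h1
  · simpa using h1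
  · simpa using h1

theorem exists_odd_walk [DecidableEq V] (G : SimpleGraph V) (n : ℕ) :
    ∀ (F : Finset (Sym2 V)), F.card = n → (↑F ⊆ G.edgeSet) → ∀ x ∈ oddSet F,
      ∃ y ∈ oddSet F, y ≠ x ∧ ∃ p : G.Walk x y, ∀ e ∈ p.edges, e ∈ F := by
  induction n with
  | zero =>
    intro F hF _ x hx
    rw [Finset.card_eq_zero] at hF
    subst hF
    rw [oddSet_empty] at hx
    exact hx.elim
  | succ n ih =>
    intro F hF hFG x hx
    have hx' := (mem_oddSet F x).1 hx
    obtain ⟨e, he⟩ := Finset.card_pos.1 hx'.pos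
    rw [Finset.mem_filter] at he
    obtain ⟨z, rfl⟩ := he.2
    have hadj : G.Adj x z := hFG he.1
    by_cases hz : z ∈ oddSet F
    · refine ⟨z, hz, hadj.ne', .cons hadj .nil, ?_⟩
      simpa using he.1
    · have hsd : F.erase s(x, z) = symmDiff F {s(x, z)} := by
        ext e
        simp only [Finset.mem_erase, Finset.mem_symmDiff, Finset.mem_singleton]
        constructor
        · tauto
        · rintro (h | ⟨h1, h2⟩)
          · tauto
          · exact absurd (h1 ▸ he.1) h2
      have hodd : oddSet (F.erase s(x, z)) = symmDiff (oddSet F) {x, z} := by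
        rw [hsd, oddSet_symmDiff, oddSet_edge]
      have hz' : z ∈ oddSet (F.erase s(x, z)) := by
        rw [hodd, Set.mem_symmDiff]; right; simp [hz]
      obtain ⟨y, hy, hyz, p, hp⟩ := ih (F.erase s(x, z))
        (by rw [Finset.card_erase_of_mem he.1, hF]; rfl)
        (fun e he => hFG (Finset.mem_of_mem_erase he)) z hz'
      have hxn : x ∉ oddSet (F.erase s(x, z)) := by
        rw [hodd, Set.mem_symmDiff]; simp [hx]
      have hyx : y ≠ x := fun h => hxn (h ▸ hy)
      refine ⟨y, ?_, hyx, .cons hadj p, ?_⟩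
      · rw [hodd, Set.mem_symmDiff] at hy
        rcases hy with h | h
        · exact h.1
        · rcases h.1 with h1 | h1
          · exact (hyx h1).elim
          · exact (hyz h1).elim
      · intro e he'
        rw [Walk.edges_cons, List.mem_cons] at he'
        rcases he' with rfl | h
        · exact he.1
        · exact Finset.mem_of_mem_erase (hp e h)

/-- all paths use only edges from `F` -/
def EdgesIn {G : SimpleGraph V} (P : Set (Σ u : V, Σ v : V, G.Walk u v)) (F : Set (Sym2 V)) :
    Prop := ∀ p ∈ P, ∀ e ∈ p.2.2.edges, e ∈ F

theorem isTJoin_union {G : SimpleGraph V} {T T' : Set V}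
    {P P' : Set (Σ u : V, Σ v : V, G.Walk u v)} (h : G.IsTJoin T P) (h' : G.IsTJoin T' P')
    (hd : ∀ p ∈ P, ∀ q ∈ P', ∀ e ∈ p.2.2.edges, e ∉ q.2.2.edges)
    (hT : ∀ x ∈ T, x ∉ T') : G.IsTJoin (T ∪ T') (P ∪ P') := by
  refine ⟨?_, ?_, ?_⟩
  · rintro p (hp | hp)
    · have := h.1 p hp
      exact ⟨this.1, this.2.1, .inl this.2.2.1, .inl this.2.2.2⟩
    · have := h'.1 p hp
      exact ⟨this.1, this.2.1, .inr this.2.2.1, .inr this.2.2.2⟩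
  · rintro p (hp | hp) q (hq | hq) hpq e he heq
    · exact h.2.1 p hp q hq hpq e he heq
    · exact hd p hp q hq e he heq
    · exact hd q hq p hp e heq he
    · exact h'.2.1 p hp q hq hpq e he heq
  · rintro t (ht | ht)
    · obtain ⟨p, ⟨hp, hpt⟩, hu⟩ := h.2.2 t ht
      refine ⟨p, ⟨.inl hp, hpt⟩, ?_⟩
      rintro q ⟨hq | hq, hqt⟩
      · exact hu q ⟨hq, hqt⟩
      · have := h'.1 q hq
        rcases hqt with rfl | rfl
        · exact (hT _ ht this.2.2.1).elim
        · exact (hT _ ht this.2.2.2).elim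
    · obtain ⟨p, ⟨hp, hpt⟩, hu⟩ := h'.2.2 t ht
      refine ⟨p, ⟨.inr hp, hpt⟩, ?_⟩
      rintro q ⟨hq | hq, hqt⟩
      · have := h.1 q hq
        rcases hqt with rfl | rfl
        · exact (hT _ this.2.2.1 ht).elim
        · exact (hT _ this.2.2.2 ht).elim
      · exact hu q ⟨hq, hqt⟩

theorem isTJoin_empty (G : SimpleGraph V) : G.IsTJoin ∅ ∅ :=
  ⟨by simp, by simp, by simp⟩

theorem isTJoin_single {G : SimpleGraph V} {u v : V} (p : G.Walk u v) (hp : p.IsPath)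
    (h : u ≠ v) : G.IsTJoin {u, v} {⟨u, v, p⟩} := by
  refine ⟨?_, ?_, ?_⟩
  · rintro _ rfl; exact ⟨hp, h, by simp, by simp⟩
  · rintro _ rfl _ rfl h; exact (h rfl).elim
  · rintro t ht
    refine ⟨⟨u, v, p⟩, ⟨rfl, ?_⟩, fun q hq => hq.1⟩
    rcases ht with rfl | rfl
    · left; rfl
    · right; rfl

/-- endpoints of a path family -/
def ends {G : SimpleGraph V} (P : Set (Σ u : V, Σ v : V, G.Walk u v)) : Set V :=
  {t | ∃ p ∈ P, p.1 = t ∨ p.2.1 = t}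

theorem ends_eq {G : SimpleGraph V} {T : Set V}
    {P : Set (Σ u : V, Σ v : V, G.Walk u v)} (h : G.IsTJoin T P) : ends P = T := by
  ext t
  constructor
  · rintro ⟨p, hp, rfl | rfl⟩
    · exact (h.1 p hp).2.2.1
    · exact (h.1 p hp).2.2.2
  · intro ht
    obtain ⟨p, ⟨hp, hpt⟩, _⟩ := h.2.2 t ht
    exact ⟨p, hp, hpt⟩

theorem isTJoin_sub {G : SimpleGraph V} {T : Set V}
    {P Q : Set (Σ u : V, Σ v : V, G.Walk u v)} (h : G.IsTJoin T P) (hQ : Q ⊆ P) :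
    G.IsTJoin (ends Q) Q := by
  refine ⟨?_, ?_, ?_⟩
  · intro p hp
    have := h.1 p (hQ hp)
    exact ⟨this.1, this.2.1, ⟨p, hp, .inl rfl⟩, ⟨p, hp, .inr rfl⟩⟩
  · intro p hp q hq
    exact h.2.1 p (hQ hp) q (hQ hq)
  · rintro t ⟨p, hp, hpt⟩
    refine ⟨p, ⟨hp, hpt⟩, ?_⟩
    rintro q ⟨hq, hqt⟩
    have ht : t ∈ T := by
      rw [← ends_eq h]; exact ⟨p, hQ hp, hpt⟩
    exact (h.2.2 t ht).unique ⟨hQ hq, hqt⟩ ⟨hQ hp, hpt⟩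

theorem ends_union {G : SimpleGraph V} (P Q : Set (Σ u : V, Σ v : V, G.Walk u v)) :
    ends (P ∪ Q) = ends P ∪ ends Q := by
  ext t
  simp only [ends, Set.mem_ofPred_eq, Set.mem_union]
  constructor
  · rintro ⟨p, hp | hp, h⟩
    · exact .inl ⟨p, hp, h⟩
    · exact .inr ⟨p, hp, h⟩
  · rintro (⟨p, hp, h⟩ | ⟨p, hp, h⟩)
    · exact ⟨p, .inl hp, h⟩
    · exact ⟨p, .inr hp, h⟩

/-- in a join, disjoint subfamilies have disjoint ends -/
theorem ends_disj {G : SimpleGraph V} {T : Set V}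
    {P Q R : Set (Σ u : V, Σ v : V, G.Walk u v)} (h : G.IsTJoin T P) (hQ : Q ⊆ P) (hR : R ⊆ P)
    (hQR : ∀ p ∈ Q, p ∉ R) : ∀ x ∈ ends Q, x ∉ ends R := by
  rintro x ⟨p, hp, hpx⟩ ⟨q, hq, hqx⟩
  have ht : x ∈ T := by
    rw [← ends_eq h]; exact ⟨p, hQ hp, hpx⟩
  have := (h.2.2 x ht).unique ⟨hQ hp, hpx⟩ ⟨hR hq, hqx⟩
  exact hQR p hp (this ▸ hq)

/-- finite edge sets contain joins of their odd vertices -/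
theorem finite_join [DecidableEq V] (G : SimpleGraph V) (n : ℕ) :
    ∀ (F : Finset (Sym2 V)), F.card ≤ n → (↑F ⊆ G.edgeSet) →
      ∃ P, G.IsTJoin (oddSet F) P ∧ EdgesIn P F := by
  induction n with
  | zero =>
    intro F hF _
    have : F = ∅ := Finset.card_eq_zero.1 (by omega)
    subst this
    rw [oddSet_empty]
    exact ⟨∅, isTJoin_empty G, by simp [EdgesIn]⟩
  | succ n ih =>
    intro F hF hFG
    by_cases he : oddSet F = ∅
    · rw [he]; exact ⟨∅, isTJoin_empty G, by simp [EdgesIn]⟩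
    · obtain ⟨x, hx⟩ := Set.nonempty_iff_ne_empty.2 he
      obtain ⟨y, hy, hyx, w, hw⟩ := exists_odd_walk G _ F rfl hFG x hx
      obtain ⟨p, hp, hpF⟩ : ∃ p : G.Walk x y, p.IsPath ∧ ∀ e ∈ p.edges, e ∈ F :=
        ⟨w.bypass, w.bypass_isPath, fun e he => hw e (w.edges_bypass_subset_edges he)⟩
      have hsub : p.edges.toFinset ⊆ F := fun e he => hpF e (by simpa using he)
      have hsd : F \ p.edges.toFinset = symmDiff F p.edges.toFinset := by
        rw [symmDiff_def, Finset.sdiff_eq_empty_iff_subset.2 hsub]; simp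
      have hodd : oddSet (F \ p.edges.toFinset) = symmDiff (oddSet F) {x, y} := by
        rw [hsd, oddSet_symmDiff, oddSet_path p hp hyx.symm]
      have hne : p.edges.toFinset.Nonempty := by
        cases p with
        | nil => exact (hyx rfl).elim
        | cons h q => exact ⟨s(_, _), by rw [List.mem_toFinset, Walk.edges_cons]; exact List.mem_cons_self⟩
      have hlt : (F \ p.edges.toFinset).card < F.card := by
        apply Finset.card_lt_card
        obtain ⟨e, he⟩ := hne
        refine ⟨Finset.sdiff_subset, fun h => ?_⟩
        exact (Finset.mem_sdiff.1 (h (hsub he))).2 he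
      obtain ⟨P, hP, hPF⟩ := ih (F \ p.edges.toFinset) (by omega)
        (fun e he => hFG (Finset.mem_sdiff.1 he).1)
      refine ⟨P ∪ {⟨x, y, p⟩}, ?_, ?_⟩
      · have := isTJoin_union hP (isTJoin_single p hp hyx.symm) ?_ ?_
        · convert this using 1
          rw [hodd]
          ext v
          simp only [Set.mem_union, Set.mem_symmDiff, Set.mem_insert_iff, Set.mem_singleton_iff]
          constructor
          · tauto
          · rintro (h | h | h)
            · rcases h with h | ⟨h | h, h1⟩
              · exact h.1
              · subst h; exact hx
              · subst h; exact hy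
            · subst h; exact hx
            · subst h; exact hy
        · rintro q hq _ rfl e he he'
          have := Finset.mem_sdiff.1 (hPF q hq e he)
          exact this.2 (by simpa using he')
        · intro v hv hv'
          rw [hodd, Set.mem_symmDiff] at hv
          rcases hv with h | h
          · exact h.2 hv'
          · apply h.2
            rcases hv' with h | h
            · rw [h]; exact hx
            · rw [h]; exact hy
      · rintro q (hq | rfl) e he
        · exact (Finset.mem_sdiff.1 (hPF q hq e he)).1
        · exact hpF e he

theorem finite_family [DecidableEq V] {G : SimpleGraph V}
    {P : Set (Σ u : V, Σ v : V, G.Walk u v)} (hfin : P.Finite) :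
    G.IsTJoin (ends P) P →
    ∃ F : Finset (Sym2 V), oddSet F = ends P ∧ ∀ e, e ∈ F ↔ ∃ p ∈ P, e ∈ p.2.2.edges := by
  induction P, hfin using Set.Finite.induction_on with
  | empty => intro _; exact ⟨∅, by rw [oddSet_empty]; simp [ends], by simp⟩
  | @insert p P hp hfin ih =>
    intro h
    obtain ⟨F, hF, hFe⟩ := ih (isTJoin_sub h (Set.subset_insert p P))
    have hpp := h.1 p (Set.mem_insert p P)
    refine ⟨symmDiff F p.2.2.edges.toFinset, ?_, ?_⟩
    · rw [oddSet_symmDiff, hF, oddSet_path _ hpp.1 hpp.2.1]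
      have hd := ends_disj h (Set.subset_insert p P) (R := {p}) (by simp)
        (fun q hq hqp => hp (by rw [Set.mem_singleton_iff] at hqp; exact hqp ▸ hq))
      have hs : ends {p} = {p.1, p.2.1} := by
        ext t; simp [ends, eq_comm]
      rw [← hs, Set.insert_eq, Set.union_comm, ends_union]
      ext t
      have := hd t
      rw [Set.mem_symmDiff, Set.mem_union]; tauto
    · intro e
      have hd : e ∈ F → e ∉ p.2.2.edges := by
        intro he
        obtain ⟨q, hq, hqe⟩ := (hFe e).1 he
        exact h.2.1 q (by simp [hq]) p (by simp) (fun h => hp (h ▸ hq)) e hqe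
      simp only [Finset.mem_symmDiff, List.mem_toFinset, Set.mem_insert_iff, exists_eq_or_imp]
      rw [← hFe]; tauto

theorem toggle_pair {G : SimpleGraph V} (hG : G.Connected) {T : Set V} {x y : V} (hxy : x ≠ y)
    (h : G.HasTJoin T) : G.HasTJoin (symmDiff T {x, y}) := by
  classical
  obtain ⟨P, hP⟩ := h
  obtain ⟨w⟩ := hG.preconnected x y
  obtain ⟨Q, hQ⟩ : ∃ Q : G.Walk x y, Q.IsPath := ⟨w.bypass, w.bypass_isPath⟩
  let P0 : Set (Σ u : V, Σ v : V, G.Walk u v) :=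
    {p | p ∈ P ∧ ((∃ e ∈ Q.edges, e ∈ p.2.2.edges) ∨ ∃ t ∈ ({x, y} : Set V), p.1 = t ∨ p.2.1 = t)}
  have hP0 : P0 ⊆ P := fun p hp => hp.1
  have hfin : P0.Finite := by
    have h1 : P0 ⊆ (⋃ e ∈ {e | e ∈ Q.edges}, {p | p ∈ P ∧ e ∈ p.2.2.edges}) ∪
        ⋃ t ∈ ({x, y} : Set V), {p | p ∈ P ∧ (p.1 = t ∨ p.2.1 = t)} := by
      rintro p ⟨hp, ⟨e, he, hep⟩ | ⟨t, ht, htp⟩⟩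
      · left; simp only [Set.mem_iUnion]; exact ⟨e, he, hp, hep⟩
      · right; simp only [Set.mem_iUnion]; exact ⟨t, ht, hp, htp⟩
    refine Set.Finite.subset (Set.Finite.union ?_ ?_) h1
    · refine Set.Finite.biUnion (List.finite_toSet _) fun e _ => Set.Subsingleton.finite ?_
      rintro p ⟨hp, hpe⟩ q ⟨hq, hqe⟩
      by_contra hne
      exact hP.2.1 p hp q hq hne e hpe hqe
    · refine Set.Finite.biUnion (Set.toFinite _) fun t _ => Set.Subsingleton.finite ?_
      rintro p ⟨hp, hpe⟩ q ⟨hq, hqe⟩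
      have ht : t ∈ T := by rw [← ends_eq hP]; exact ⟨p, hp, hpe⟩
      exact (hP.2.2 t ht).unique ⟨hp, hpe⟩ ⟨hq, hqe⟩
  obtain ⟨F0, hF0, hF0e⟩ := finite_family hfin (isTJoin_sub hP hP0)
  have hoF : oddSet (symmDiff F0 Q.edges.toFinset) = symmDiff (ends P0) {x, y} := by
    rw [oddSet_symmDiff, hF0, oddSet_path _ hQ hxy]
  obtain ⟨P1, hP1, hP1e⟩ := finite_join G _ (symmDiff F0 Q.edges.toFinset) le_rfl (by
    intro e he
    rw [Finset.mem_coe, Finset.mem_symmDiff] at he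
    rcases he with he | he
    · obtain ⟨p, hp, hpe⟩ := (hF0e e).1 he.1
      exact Walk.edges_subset_edgeSet _ hpe
    · exact Walk.edges_subset_edgeSet Q (by simpa using he.1))
  rw [hoF] at hP1
  have hsub : P \ P0 ⊆ P := Set.sdiff_subset
  have hdis := ends_disj hP hsub hP0 (fun p hp => hp.2)
  have hxyn : ∀ t ∈ ({x, y} : Set V), t ∉ ends (P \ P0) := by
    rintro t ht ⟨p, hp, hpt⟩
    exact hp.2 ⟨hp.1, .inr ⟨t, ht, hpt⟩⟩
  refine ⟨(P \ P0) ∪ P1, ?_⟩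
  have := isTJoin_union (isTJoin_sub hP hsub) hP1 ?_ ?_
  · convert this using 1
    have hT : T = ends (P \ P0) ∪ ends P0 := by
      rw [← ends_union, Set.sdiff_union_of_subset hP0, ends_eq hP]
    ext t
    have h1 := hdis t
    have h2 := hxyn t
    rw [hT]
    simp only [Set.mem_symmDiff, Set.mem_union]
    tauto
  · intro p hp q hq e he heq
    have := hP1e q hq e heq
    rw [Finset.mem_coe, Finset.mem_symmDiff] at this
    rcases this with h | h
    · obtain ⟨p', hp', hpe'⟩ := (hF0e e).1 h.1
      exact hP.2.1 p hp.1 p' hp'.1 (fun hh => hp.2 (hh ▸ hp')) e he hpe'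
    · exact hp.2 ⟨hp.1, .inl ⟨e, by simpa using h.1, he⟩⟩
  · intro t ht ht'
    have h1 := hdis t ht
    have h2 := fun h => hxyn t h ht
    rw [Set.mem_symmDiff] at ht'
    tauto

theorem toggle_even {G : SimpleGraph V} (hG : G.Connected) (k : ℕ) : ∀ (T S : Set V), S.Finite →
    S.ncard = 2 * k → G.HasTJoin T → G.HasTJoin (symmDiff T S) := by
  induction k with
  | zero =>
    intro T S hS hc h
    rw [mul_zero, Set.ncard_eq_zero hS] at hc
    subst hc
    rwa [← Set.bot_eq_empty, symmDiff_bot]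
  | succ k ih =>
    intro T S hS hc h
    obtain ⟨x, hx, y, hy, hxy⟩ := (Set.one_lt_ncard hS).1 (by omega)
    have hsub : ({x, y} : Set V) ⊆ S := by rintro _ (rfl | rfl) <;> assumption
    have h1 : (S \ {x, y}).ncard = 2 * k := by
      rw [Set.ncard_sdiff hsub, Set.ncard_pair hxy]; omega
    have h2 := ih _ (S \ {x, y}) (hS.subset Set.sdiff_subset) h1 (toggle_pair hG hxy h)
    convert h2 using 1
    rw [symmDiff_assoc]
    congr 1
    ext t
    have := @hsub t
    simp only [Set.mem_symmDiff, Set.mem_sdiff]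
    tauto

end TJ

namespace TJ

variable {V : Type*}

/-- children of `u` in `f` -/
def Ch (r : V) (par : V → V) (f : Set V) (u : V) : Set V := {c | c ≠ r ∧ par c = u ∧ c ∈ f}

/-- finitely many and an odd number of items at `u` -/
def OddAt (r : V) (par : V → V) (T f : Set V) (u : V) : Prop :=
  (Ch r par f u).Finite ∧ ¬ (Odd (Ch r par f u).ncard ↔ u ∈ T)

/-- no infinite descending `f`-chain -/
def NoChain (r : V) (par : V → V) (f : Set V) : Prop :=
  ∀ s : ℕ → V, ¬ ∀ n, s n ∈ f ∧ s (n + 1) ≠ r ∧ par (s (n + 1)) = s n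

/-- partial solutions -/
structure Good (r : V) (par : V → V) (T D f : Set V) : Prop where
  down : ∀ c, c ≠ r → par c ∈ D → c ∈ D
  sub : f ⊆ D
  loc : ∀ u ∈ D, (Ch r par f u).Finite → (u ∈ f ↔ OddAt r par T f u)
  chain : NoChain r par f

theorem ch_congr {r : V} {par : V → V} {D f f' : Set V}
    (hd : ∀ c, c ≠ r → par c ∈ D → c ∈ D) (h : ∀ u ∈ D, (u ∈ f' ↔ u ∈ f)) {u : V} (hu : u ∈ D) :
    Ch r par f' u = Ch r par f u := by
  ext c
  constructor
  · rintro ⟨h1, h2, h3⟩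
    exact ⟨h1, h2, (h c (hd c h1 (h2 ▸ hu))).1 h3⟩
  · rintro ⟨h1, h2, h3⟩
    exact ⟨h1, h2, (h c (hd c h1 (h2 ▸ hu))).2 h3⟩

theorem chain_in {r : V} {par : V → V} {D f f' : Set V}
    (hd : ∀ c, c ≠ r → par c ∈ D → c ∈ D) (h : ∀ u ∈ D, (u ∈ f' ↔ u ∈ f))
    (hf : NoChain r par f) (s : ℕ → V)
    (hs : ∀ n, s n ∈ f' ∧ s (n + 1) ≠ r ∧ par (s (n + 1)) = s n) (k : ℕ) : s k ∉ D := by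
  intro hk
  have hall : ∀ n, s (k + n) ∈ D := by
    intro n
    induction n with
    | zero => exact hk
    | succ n ih =>
      have := hs (k + n)
      exact hd _ this.2.1 (by rw [show k + (n + 1) = k + n + 1 from rfl, this.2.2]; exact ih)
  refine hf (fun n => s (k + n)) fun n => ⟨?_, (hs (k + n)).2⟩
  exact (h _ (hall n)).1 (hs (k + n)).1

theorem good_maximal (r : V) (par : V → V) (T : Set V) :
    ∃ D f, Good r par T D f ∧ ∀ D' f', Good r par T D' f' → D ⊆ D' →
      (∀ u ∈ D, (u ∈ f' ↔ u ∈ f)) → D' ⊆ D := by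
  let S := {p : Set V × Set V // Good r par T p.1 p.2}
  let R : S → S → Prop := fun a b => a.1.1 ⊆ b.1.1 ∧ ∀ u ∈ a.1.1, (u ∈ b.1.2 ↔ u ∈ a.1.2)
  have hz := exists_maximal_of_chains_bounded (r := R) ?_ ?_
  · obtain ⟨m, hm⟩ := hz
    exact ⟨m.1.1, m.1.2, m.2, fun D' f' hg h1 h2 => (hm ⟨(D', f'), hg⟩ ⟨h1, h2⟩).1⟩
  · intro c hc
    let D : Set V := {u | ∃ a ∈ c, u ∈ a.1.1}
    let f : Set V := {u | ∃ a ∈ c, u ∈ a.1.2}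
    have hag : ∀ a ∈ c, ∀ u ∈ a.1.1, (u ∈ f ↔ u ∈ a.1.2) := by
      intro a ha u hu
      constructor
      · rintro ⟨b, hb, hub⟩
        by_cases hab : a = b
        · rw [hab]; exact hub
        rcases hc ha hb hab with h | h
        · exact (h.2 u hu).1 hub
        · exact (h.2 u (b.2.sub hub)).2 hub
      · intro h; exact ⟨a, ha, h⟩
    have hg : Good r par T D f := by
      refine ⟨?_, ?_, ?_, ?_⟩
      · rintro v hv ⟨a, ha, h⟩
        exact ⟨a, ha, a.2.down v hv h⟩
      · rintro u ⟨a, ha, h⟩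
        exact ⟨a, ha, a.2.sub h⟩
      · rintro u ⟨a, ha, h⟩
        have h1 := ch_congr a.2.down (hag a ha) h
        have h2 := a.2.loc u h
        unfold OddAt at h2 ⊢
        rw [h1, hag a ha u h]
        exact h2
      · intro s hs
        obtain ⟨a, ha, h⟩ := (hs 0).1
        exact chain_in a.2.down (hag a ha) a.2.chain s hs 0 (a.2.sub h)
    exact ⟨⟨(D, f), hg⟩, fun a ha => ⟨fun u hu => ⟨a, ha, hu⟩, hag a ha⟩⟩
  · rintro a b c ⟨h1, h2⟩ ⟨h3, h4⟩
    exact ⟨h1.trans h3, fun u hu => (h4 u (h1 hu)).trans (h2 u hu)⟩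

/-- levels: distance to an odd vertex below -/
def Lev (r : V) (par : V → V) (U X : Set V) : ℕ → Set V
  | 0 => X
  | n + 1 => {u | ∃ c, c ≠ r ∧ par c = u ∧ c ∈ U ∧ c ∈ Lev r par U X n}

/-- extension along rays, by depth -/
def ray (r : V) (par : V → V) (U X : Set V) (nxt : V → V) : ℕ → V → Prop
  | 0, _ => False
  | n + 1, u => u ≠ r ∧ par u ∈ U ∧ nxt (par u) = u ∧
      ¬ (ray r par U X nxt n (par u) ↔ par u ∈ X)

theorem prop_aux1 {a b o t : Prop} (h : ¬ (a ↔ b)) (hb : b ↔ ¬ (o ↔ t)) : a ↔ ¬ (¬ o ↔ t) := by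
  tauto

theorem prop_aux2 {a b o t : Prop} (h : a ↔ b) (hb : b ↔ ¬ (o ↔ t)) : a ↔ ¬ (o ↔ t) := by
  tauto

set_option maxHeartbeats 800000 in
theorem exists_good (r : V) (par : V → V) (dep : V → ℕ) (hr : dep r = 0)
    (hpar : ∀ v, v ≠ r → dep v = dep (par v) + 1) (T : Set V) :
    ∃ f, Good r par T Set.univ f := by
  classical
  obtain ⟨D, f, hg, hmax⟩ := good_maximal r par T
  by_cases hD : D = Set.univ
  · exact ⟨f, hD ▸ hg⟩
  exfalso
  let U : Set V := Dᶜ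
  let X : Set V := {u | u ∈ U ∧ OddAt r par T f u}
  have hup : ∀ c, c ≠ r → c ∈ U → par c ∈ U := fun c hc hcU h => hcU (hg.down c hc h)
  -- every `u ∈ U` has an odd vertex at or below it
  have ha : ∀ u ∈ U, ∃ n, u ∈ Lev r par U X n := by
    by_contra! hcon
    obtain ⟨u, hu, hn⟩ := hcon
    let B : Set V := {v | v ∈ U ∧ ∀ n, v ∉ Lev r par U X n}
    have hB : Good r par T (D ∪ B) f := by
      refine ⟨?_, fun v hv => .inl (hg.sub hv), ?_, hg.chain⟩
      · rintro c hc (h | h)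
        · exact .inl (hg.down c hc h)
        · by_cases hcD : c ∈ D
          · exact .inl hcD
          · exact .inr ⟨hcD, fun n hn => h.2 (n + 1) ⟨c, hc, rfl, hcD, hn⟩⟩
      · rintro v (h | h) hfin
        · exact hg.loc v h hfin
        · constructor
          · intro hv; exact (h.1 (hg.sub hv)).elim
          · intro hv; exact (h.2 0 ⟨h.1, hv⟩).elim
    exact hu (hmax _ _ hB Set.subset_union_left (fun _ _ => Iff.rfl) (.inr ⟨hu, hn⟩))
  -- every `u ∈ U` has a child in `U`
  have hb : ∀ u ∈ U, ∃ c, c ≠ r ∧ par c = u ∧ c ∈ U := by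
    by_contra! hcon
    obtain ⟨u, hu, hn⟩ := hcon
    have huX : u ∈ X := by
      obtain ⟨n, hn'⟩ := ha u hu
      cases n with
      | zero => exact hn'
      | succ n =>
        obtain ⟨c, h1, h2, h3, _⟩ := hn'
        exact (hn c h1 h2 h3).elim
    have hag : ∀ v ∈ D, (v ∈ f ∪ {u} ↔ v ∈ f) := by
      intro v hv
      constructor
      · rintro (h | rfl)
        · exact h
        · exact (hu hv).elim
      · exact .inl
    have hchu : Ch r par (f ∪ {u}) u = Ch r par f u := by
      ext c
      constructor
      · rintro ⟨h1, h2, h3 | rfl⟩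
        · exact ⟨h1, h2, h3⟩
        · have := hpar c h1
          rw [h2] at this; omega
      · rintro ⟨h1, h2, h3⟩; exact ⟨h1, h2, .inl h3⟩
    have hB : Good r par T (D ∪ {u}) (f ∪ {u}) := by
      refine ⟨?_, ?_, ?_, ?_⟩
      · rintro c hc (h | h)
        · exact .inl (hg.down c hc h)
        · left; by_contra hcD; exact hn c hc h hcD
      · rintro v (hv | hv)
        · exact .inl (hg.sub hv)
        · exact .inr hv
      · rintro v (h | rfl)
        · have h1 := ch_congr hg.down hag h
          have h2 := hg.loc v h
          unfold OddAt at h2 ⊢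
          rw [h1, hag v h]
          exact h2
        · intro _
          have := huX.2
          unfold OddAt at this ⊢
          rw [hchu]
          exact ⟨fun _ => this, fun _ => .inr rfl⟩
      · intro s hs
        have h1 := chain_in hg.down hag hg.chain s hs
        have h2 : ∀ n, s n = u := by
          intro n
          rcases (hs n).1 with h | h
          · exact (h1 n (hg.sub h)).elim
          · exact h
        have h3 := hs 0
        rw [h2, h2] at h3
        have := hpar u h3.2.1
        rw [h3.2.2] at this; omega
    exact hu (hmax _ _ hB Set.subset_union_left hag (.inr rfl))
  -- choose the next vertex of the ray
  have hlev : ∀ u, ∃ n, u ∈ U → (u ∈ Lev r par U X n ∧ ∀ m, u ∈ Lev r par U X m → n ≤ m) := by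
    intro u
    by_cases hu : u ∈ U
    · exact ⟨Nat.find (ha u hu), fun _ => ⟨Nat.find_spec (ha u hu), fun m hm => Nat.find_min' _ hm⟩⟩
    · exact ⟨0, fun h => (hu h).elim⟩
  choose N hN using hlev
  have hnext : ∀ u, ∃ c, u ∈ U → (c ≠ r ∧ par c = u ∧ c ∈ U ∧
      ∀ c', c' ≠ r → par c' = u → c' ∈ U → N c ≤ N c') := by
    intro u
    by_cases hu : u ∈ U
    · have hne : ∃ n, ∃ c, (c ≠ r ∧ par c = u ∧ c ∈ U) ∧ N c = n := by
        obtain ⟨c, hc⟩ := hb u hu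
        exact ⟨_, c, hc, rfl⟩
      obtain ⟨c, hc, hcn⟩ := Nat.find_spec hne
      refine ⟨c, fun _ => ⟨hc.1, hc.2.1, hc.2.2, fun c' h1 h2 h3 => ?_⟩⟩
      rw [hcn]
      exact Nat.find_min' hne ⟨c', ⟨h1, h2, h3⟩, rfl⟩
    · exact ⟨u, fun h => (hu h).elim⟩
  choose nxt hnxt using hnext
  have hdec : ∀ u ∈ U, u ∉ X → N (nxt u) < N u := by
    intro u hu hX
    have h1 := (hN u hu).1
    cases hn : N u with
    | zero => rw [hn] at h1; exact (hX h1).elim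
    | succ n =>
      rw [hn] at h1
      obtain ⟨c, h2, h3, h4, h5⟩ := h1
      have := (hnxt u hu).2.2.2 c h2 h3 h4
      have := (hN c h4).2 n h5
      omega
  let g : Set V := {u | u ∈ U ∧ ray r par U X nxt (dep u) u}
  have hgray : ∀ u, u ≠ r → u ∈ U → (u ∈ g ↔ nxt (par u) = u ∧ ¬ (par u ∈ g ↔ par u ∈ X)) := by
    intro u hur hu
    have h1 := hup u hur hu
    simp only [g, Set.mem_ofPred_eq]
    rw [hpar u hur, ray]
    tauto
  have hag : ∀ v ∈ D, (v ∈ f ∪ g ↔ v ∈ f) := by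
    intro v hv
    constructor
    · rintro (h | h)
      · exact h
      · exact (h.1 hv).elim
    · exact .inl
  have hch : ∀ u ∈ U, Ch r par (f ∪ g) u = Ch r par f u ∪ {c | c = nxt u ∧ c ∈ g} := by
    intro u hu
    ext c
    constructor
    · rintro ⟨h1, h2, h3 | h3⟩
      · exact .inl ⟨h1, h2, h3⟩
      · right
        refine ⟨?_, h3⟩
        have := ((hgray c h1 h3.1).1 h3).1
        rw [← this, h2]
    · rintro (⟨h1, h2, h3⟩ | ⟨h1, h2⟩)
      · exact ⟨h1, h2, .inl h3⟩
      · have := hnxt u hu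
        rw [← h1] at this
        exact ⟨this.1, this.2.1, .inr h2⟩
  have hall : Good r par T Set.univ (f ∪ g) := by
    refine ⟨fun _ _ _ => trivial, fun _ _ => trivial, ?_, ?_⟩
    · intro v _ hfin
      by_cases hv : v ∈ D
      · have h1 := ch_congr hg.down hag hv
        have h2 := hg.loc v hv
        unfold OddAt at h2 ⊢
        rw [h1] at hfin ⊢
        rw [hag v hv]
        exact h2 hfin
      · have hvU : v ∈ U := hv
        have hnv := hnxt v hvU
        have hgn := hgray (nxt v) hnv.1 hnv.2.2.1
        rw [hnv.2.1] at hgn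
        have hvfg : v ∈ f ∪ g ↔ v ∈ g := ⟨fun h => h.elim (fun h => (hv (hg.sub h)).elim) id, .inr⟩
        have hfin0 : (Ch r par f v).Finite := hfin.subset (by rw [hch v hvU]; exact Set.subset_union_left)
        have hX : v ∈ X ↔ ¬ (Odd (Ch r par f v).ncard ↔ v ∈ T) :=
          ⟨fun h => h.2.2, fun h => ⟨hvU, hfin0, h⟩⟩
        have hodd : OddAt r par T (f ∪ g) v ↔ ¬ (Odd (Ch r par (f ∪ g) v).ncard ↔ v ∈ T) :=
          ⟨fun h => h.2, fun h => ⟨hfin, h⟩⟩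
        rw [hvfg, hodd]
        by_cases hn : nxt v ∈ g
        · have h1 : Ch r par (f ∪ g) v = insert (nxt v) (Ch r par f v) := by
            rw [hch v hvU]
            ext c
            simp only [Set.mem_union, Set.mem_insert_iff, Set.mem_ofPred_eq]
            constructor
            · tauto
            · rintro (rfl | h)
              · exact .inr ⟨rfl, hn⟩
              · exact .inl h
          have h2 : nxt v ∉ Ch r par f v := fun h => hn.1 (hg.sub h.2.2)
          rw [h1, Set.ncard_insert_of_notMem h2 hfin0, Nat.odd_add_one]
          exact prop_aux1 (hgn.1 hn).2 hX
        · have h1 : Ch r par (f ∪ g) v = Ch r par f v := by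
            rw [hch v hvU]
            ext c
            simp only [Set.mem_union, Set.mem_ofPred_eq]
            constructor
            · rintro (h | ⟨rfl, h⟩)
              · exact h
              · exact (hn h).elim
            · exact .inl
          rw [h1]
          exact prop_aux2 (by_contra fun h => hn (hgn.2 ⟨rfl, h⟩)) hX
    · intro s hs
      have h1 := chain_in hg.down hag hg.chain s hs
      have h2 : ∀ n, s n ∈ g := fun n => (hs n).1.elim (fun h => (h1 n (hg.sub h)).elim) id
      have h3 : ∀ n, s (n + 1) = nxt (s n) ∧ s n ∉ X := by
        intro n
        have h4 := (hgray _ (hs n).2.1 (h1 (n + 1))).1 (h2 (n + 1))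
        rw [(hs n).2.2] at h4
        exact ⟨h4.1.symm, fun h => h4.2 ⟨fun _ => h, fun _ => h2 n⟩⟩
      have h5 : ∀ n, N (s n) + n ≤ N (s 0) := by
        intro n
        induction n with
        | zero => simp
        | succ n ih =>
          have := hdec (s n) (h1 n) (h3 n).2
          rw [← (h3 n).1] at this
          omega
      have := h5 (N (s 0) + 1)
      omega
  exact hD (Set.eq_univ_of_univ_subset (hmax _ _ hall (Set.subset_univ _) hag))

end TJ

namespace TJ
open SimpleGraph

variable {V : Type*}

theorem exists_invol {α : Type*} (S : Set α) (h : S.Infinite ∨ Even S.ncard) :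
    ∃ m : α → α, ∀ x ∈ S, m x ∈ S ∧ m (m x) = x ∧ m x ≠ x := by
  classical
  obtain ⟨β, ⟨e⟩⟩ : ∃ β : Type _, Nonempty (β ⊕ β ≃ S) := by
    by_cases hS : S.Infinite
    · refine ⟨S, Cardinal.eq.1 ?_⟩
      have : Infinite S := hS.to_subtype
      rw [Cardinal.mk_sum, Cardinal.lift_id, Cardinal.add_eq_self]
      exact Cardinal.aleph0_le_mk S
    · obtain ⟨k, hk⟩ := h.resolve_left hS
      rw [Set.not_infinite] at hS
      have : Finite S := hS
      refine ⟨ULift (Fin k), Finite.card_eq.1 ?_⟩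
      rw [Nat.card_sum, Nat.card_coe_set_eq, hk]
      simp
  refine ⟨fun x => if hx : x ∈ S then (e ((e.symm ⟨x, hx⟩).swap) : α) else x, ?_⟩
  intro x hx
  simp only [hx, dif_pos]
  refine ⟨Subtype.coe_prop _, ?_, ?_⟩
  · simp
  · intro h
    have h1 : e ((e.symm ⟨x, hx⟩).swap) = ⟨x, hx⟩ := Subtype.ext h
    rw [← Equiv.eq_symm_apply] at h1
    cases h2 : e.symm ⟨x, hx⟩ <;> simp [h2] at h1

theorem exists_invol1 {α : Type*} (S : Set α) (h : S.Infinite ∨ Odd S.ncard) :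
    ∃ m : α → α, ∃ a ∈ S, m a = a ∧ ∀ x ∈ S, m x ∈ S ∧ m (m x) = x ∧ (m x = x → x = a) := by
  classical
  have hne : S.Nonempty := by
    rcases h with h | h
    · exact h.nonempty
    · exact Set.nonempty_of_ncard_ne_zero h.pos.ne'
  obtain ⟨a, ha⟩ := hne
  obtain ⟨m, hm⟩ := exists_invol (S \ {a}) (by
    by_cases hS : S.Infinite
    · exact .inl (hS.sdiff (Set.finite_singleton a))
    · right
      have h1 := h.resolve_left hS
      rw [Set.ncard_sdiff_singleton_of_mem ha]
      obtain ⟨k, hk⟩ := h1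
      exact ⟨k, by omega⟩)
  refine ⟨fun x => if x = a then a else m x, a, ha, by simp, ?_⟩
  intro x hx
  by_cases hxa : x = a
  · subst hxa; simp [hx]
  · obtain ⟨h1, h2, h3⟩ := hm x ⟨hx, hxa⟩
    have h4 : m x ≠ a := h1.2
    simp only [hxa, if_false, h4]
    exact ⟨h1.1, h2, fun h => (h3 h).elim⟩

/-- location of an item -/
def loc (par : V → V) : V ⊕ V → V := Sum.elim id par

/-- the items at all vertices -/
def Itm (T f : Set V) : Set (V ⊕ V) := {i | Sum.elim (· ∈ T) (· ∈ f) i}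

theorem exists_matching {r : V} {par : V → V} {T f : Set V} (hg : Good r par T Set.univ f)
    (hrf : r ∉ f) : ∃ m : V ⊕ V → V ⊕ V,
      (∀ i ∈ Itm T f, m i ∈ Itm T f ∧ m (m i) = i ∧ loc par (m i) = loc par i ∧
        (m i = i → loc par i ∈ f)) ∧
      (∀ i ∈ Itm T f, ∀ j ∈ Itm T f, m i = i → m j = j → loc par i = loc par j → i = j) ∧
      (∀ u ∈ f, ∃ i ∈ Itm T f, m i = i ∧ loc par i = u) := by
  classical
  have hS : ∀ u, {i | i ∈ Itm T f ∧ loc par i = u} =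
      (Sum.inl '' (({u} : Set V) ∩ T)) ∪ Sum.inr '' (Ch r par f u) := by
    intro u
    ext i
    rcases i with t | c
    · simp [Itm, loc, Ch]
      tauto
    · simp [Itm, loc, Ch]
      constructor
      · rintro ⟨h1, h2⟩
        exact ⟨fun h => hrf (h ▸ h1), h2, h1⟩
      · tauto
  have key : ∀ u, ∃ m : V ⊕ V → V ⊕ V,
      (∀ i, i ∈ Itm T f ∧ loc par i = u → (m i ∈ Itm T f ∧ loc par (m i) = u) ∧ m (m i) = i ∧
        (m i = i → u ∈ f)) ∧
      (∀ i ∈ Itm T f, ∀ j ∈ Itm T f, loc par i = u → loc par j = u → m i = i → m j = j → i = j) ∧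
      (u ∈ f → ∃ i ∈ Itm T f, m i = i ∧ loc par i = u) := by
    intro u
    have hpar : {i | i ∈ Itm T f ∧ loc par i = u}.Infinite ∨
        (u ∈ f ↔ Odd {i | i ∈ Itm T f ∧ loc par i = u}.ncard) := by
      by_cases hfin : (Ch r par f u).Finite
      · right
        rw [hg.loc u trivial hfin, hS u]
        have hd : Disjoint (Sum.inl '' (({u} : Set V) ∩ T)) (Sum.inr '' (Ch r par f u)) := by
          rw [Set.disjoint_left]
          rintro _ ⟨t, _, rfl⟩ ⟨c, _, h⟩
          simp at h
        rw [Set.ncard_union_eq hd (((Set.finite_singleton u).inter_of_left T).image _)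
          (hfin.image _), Set.ncard_image_of_injective _ Sum.inl_injective,
          Set.ncard_image_of_injective _ Sum.inr_injective]
        have h1 : OddAt r par T f u ↔ ¬ (Odd (Ch r par f u).ncard ↔ u ∈ T) :=
          ⟨fun h => h.2, fun h => ⟨hfin, h⟩⟩
        rw [h1]
        by_cases hu : u ∈ T
        · rw [Set.inter_eq_left.2 (by simpa using hu), Set.ncard_singleton, add_comm,
            Nat.odd_add_one]
          tauto
        · rw [Set.singleton_inter_eq_empty.2 hu, Set.ncard_empty, zero_add]
          tauto
      · left
        rw [hS u]
        exact (Set.Infinite.image Sum.inr_injective.injOn hfin).mono Set.subset_union_right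
    by_cases hu : u ∈ f
    · obtain ⟨m, a, ha, hma, hm⟩ := exists_invol1 {i | i ∈ Itm T f ∧ loc par i = u}
        (hpar.imp id fun h => h.1 hu)
      refine ⟨m, ?_, ?_, ?_⟩
      · intro i hi
        exact ⟨(hm i hi).1, (hm i hi).2.1, fun _ => hu⟩
      · intro i hi j hj h1 h2 h3 h4
        rw [(hm i ⟨hi, h1⟩).2.2 h3, (hm j ⟨hj, h2⟩).2.2 h4]
      · intro _; exact ⟨a, ha.1, hma, ha.2⟩
    · obtain ⟨m, hm⟩ := exists_invol {i | i ∈ Itm T f ∧ loc par i = u}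
        (hpar.imp id fun h => by rw [← Nat.not_odd_iff_even, ← h]; exact hu)
      refine ⟨m, ?_, ?_, ?_⟩
      · intro i hi
        exact ⟨(hm i hi).1, (hm i hi).2.1, fun h => ((hm i hi).2.2 h).elim⟩
      · intro i hi j hj h1 h2 h3 h4
        exact ((hm i ⟨hi, h1⟩).2.2 h3).elim
      · intro h; exact (hu h).elim
  choose m hm1 hm2 hm3 using key
  refine ⟨fun i => m (loc par i) i, ?_, ?_, ?_⟩
  · intro i hi
    obtain ⟨⟨h1, h2⟩, h3, h4⟩ := hm1 (loc par i) i ⟨hi, rfl⟩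
    refine ⟨h1, ?_, h2, h4⟩
    simp only [h2, h3]
  · intro i hi j hj h1 h2 h3
    exact hm2 (loc par i) i hi j hj rfl h3.symm h1 (by rw [h3]; exact h2)
  · intro u hu
    obtain ⟨i, hi, h1, h2⟩ := hm3 u hu
    exact ⟨i, hi, by subst h2; exact h1, h2⟩

theorem join_of_good (G : SimpleGraph V) {r : V} {par : V → V} {dep : V → ℕ}
    (hpar : ∀ v, v ≠ r → dep v = dep (par v) + 1) (hadj : ∀ v, v ≠ r → G.Adj v (par v))
    {T f : Set V} (hg : Good r par T Set.univ f) (hrf : r ∉ f) : G.HasTJoin T := by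
  classical
  obtain ⟨m, hm, hmu, hme⟩ := exists_matching hg hrf
  have hfr : ∀ c ∈ f, c ≠ r := fun c hc h => hrf (h ▸ hc)
  let up : V ⊕ V → V ⊕ V → Prop := fun i j => i ∈ Itm T f ∧ m i = i ∧ j = Sum.inr (loc par i)
  let Tr : V ⊕ V → V → Prop := fun i t => t ∈ T ∧ Relation.ReflTransGen up (Sum.inl t) i
  have hupI : ∀ i j, up i j → j ∈ Itm T f := by
    rintro i j ⟨h1, h2, rfl⟩
    exact (hm i h1).2.2.2 h2
  have hTrI : ∀ i t, Tr i t → i ∈ Itm T f := by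
    rintro i t ⟨ht, h⟩
    induction h with
    | refl => exact ht
    | tail _ h _ => exact hupI _ _ h
  -- determinism
  have hru : Relator.RightUnique up := by
    rintro a b c ⟨_, _, rfl⟩ ⟨_, _, rfl⟩; rfl
  have hlu : Relator.RightUnique (Function.swap up) := by
    rintro a b c ⟨h1, h2, h3⟩ ⟨h4, h5, h6⟩
    refine hmu b h1 c h4 h2 h5 ?_
    rw [h3] at h6
    exact Sum.inr_injective h6
  have hinl : ∀ i t, Relation.ReflTransGen up i (Sum.inl t) → i = Sum.inl t := by
    intro i t h
    rcases Relation.ReflTransGen.cases_tail h with h | ⟨j, _, _, _, h⟩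
    · exact h.symm
    · simp at h
  have hTru : ∀ i t t', Tr i t → Tr i t' → t = t' := by
    rintro i t t' ⟨_, h⟩ ⟨_, h'⟩
    rw [← Relation.reflTransGen_swap] at h h'
    rcases Relation.ReflTransGen.total_of_right_unique hlu h h' with h1 | h1
    · rw [Relation.reflTransGen_swap] at h1
      exact (Sum.inl_injective (hinl _ _ h1)).symm
    · rw [Relation.reflTransGen_swap] at h1
      exact Sum.inl_injective (hinl _ _ h1)
  have hmax : ∀ k l, m k ≠ k → Relation.ReflTransGen up k l → l = k := by
    intro k l hk h
    rcases Relation.ReflTransGen.cases_head h with h | ⟨j, ⟨_, h, _⟩, _⟩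
    · exact h.symm
    · exact (hk h).elim
  have hKu : ∀ t k l, m k ≠ k → m l ≠ l → Tr k t → Tr l t → k = l := by
    rintro t k l hk hl ⟨_, h⟩ ⟨_, h'⟩
    rcases Relation.ReflTransGen.total_of_right_unique hru h h' with h1 | h1
    · exact (hmax _ _ hk h1).symm
    · exact hmax _ _ hl h1
  -- every terminal reaches a matched item
  have hKe : ∀ n i t, dep (loc par i) ≤ n → Tr i t → ∃ k, m k ≠ k ∧ Tr k t := by
    intro n
    induction n with
    | zero =>
      intro i t hd h
      refine ⟨i, fun hi => ?_, h⟩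
      have h1 := (hm i (hTrI i t h)).2.2.2 hi
      have := hpar _ (hfr _ h1)
      omega
    | succ n ih =>
      intro i t hd h
      by_cases hi : m i = i
      · have h1 := (hm i (hTrI i t h)).2.2.2 hi
        have h2 := hpar _ (hfr _ h1)
        refine ih (Sum.inr (loc par i)) t ?_ ⟨h.1, h.2.tail ⟨hTrI i t h, hi, rfl⟩⟩
        change dep (par (loc par i)) ≤ n
        omega
      · exact ⟨i, hi, h⟩
  -- every item has a terminal
  have hwf : WellFounded (fun c u : V => c ∈ f ∧ u ∈ f ∧ c ≠ r ∧ par c = u) := by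
    rw [wellFounded_iff_isEmpty_descending_chain]
    refine ⟨fun ⟨s, hs⟩ => hg.chain s fun n => ⟨(hs n).2.1, (hs n).2.2⟩⟩
  have hTf : ∀ c, c ∈ f → ∃ t, Tr (Sum.inr c) t := by
    intro c
    induction c using hwf.induction with
    | _ c ih =>
      intro hc
      obtain ⟨i, hi, h1, h2⟩ := hme c hc
      have hup : up i (Sum.inr c) := ⟨hi, h1, by rw [h2]⟩
      rcases i with t | c'
      · exact ⟨t, hi, Relation.ReflTransGen.single hup⟩
      · obtain ⟨t, ht, h⟩ := ih c' ⟨hi, hc, hfr _ hi, h2⟩ hi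
        exact ⟨t, ht, h.tail hup⟩
  have hTe : ∀ i ∈ Itm T f, ∃ t, Tr i t := by
    rintro (t | c) hi
    · exact ⟨t, hi, Relation.ReflTransGen.refl⟩
    · exact hTf c hi
  have hTex : ∀ i, ∃ t, i ∈ Itm T f → Tr i t := by
    intro i
    by_cases hi : i ∈ Itm T f
    · obtain ⟨t, ht⟩ := hTe i hi
      exact ⟨t, fun _ => ht⟩
    · exact ⟨r, fun h => (hi h).elim⟩
  choose τ hτ using hTex
  -- reachability
  have hwalk : ∀ i t, Tr i t → ∀ v, v = loc par i → ∃ w : G.Walk t v, ∀ e ∈ w.edges,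
      ∃ c, c ∈ f ∧ Tr (Sum.inr c) t ∧ e = s(c, par c) := by
    rintro i t ⟨ht, h⟩
    induction h with
    | refl =>
      intro v hv
      have hv : v = t := hv
      subst hv
      exact ⟨.nil, by simp⟩
    | @tail i j hi hij ih =>
      intro v hv
      obtain ⟨w, hw⟩ := ih _ rfl
      obtain ⟨h1, h2, rfl⟩ := hij
      have hf := (hm i h1).2.2.2 h2
      have hv : v = par (loc par i) := hv
      subst hv
      refine ⟨w.concat (hadj _ (hfr _ hf)), ?_⟩
      intro e he
      rw [Walk.edges_concat, List.concat_eq_append, List.mem_append, List.mem_singleton] at he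
      rcases he with he | he
      · exact hw e he
      · exact ⟨loc par i, hf, ⟨ht, hi.tail ⟨h1, h2, rfl⟩⟩, he⟩
  have hpath : ∀ k ∈ Itm T f, ∃ w : G.Walk (τ k) (τ (m k)), w.IsPath ∧ ∀ e ∈ w.edges,
      ∃ c, c ∈ f ∧ (Tr (Sum.inr c) (τ k) ∨ Tr (Sum.inr c) (τ (m k))) ∧ e = s(c, par c) := by
    intro k hk
    have hk' := hm k hk
    obtain ⟨w1, hw1⟩ := hwalk k _ (hτ k hk) _ rfl
    obtain ⟨w2, hw2⟩ := hwalk (m k) _ (hτ _ hk'.1) (loc par k) hk'.2.2.1.symm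
    refine ⟨(w1.append w2.reverse).bypass, Walk.bypass_isPath _, ?_⟩
    intro e he
    have he := Walk.edges_bypass_subset_edges _ he
    rw [Walk.edges_append, List.mem_append, Walk.edges_reverse, List.mem_reverse] at he
    rcases he with he | he
    · obtain ⟨c, h1, h2, h3⟩ := hw1 e he
      exact ⟨c, h1, .inl h2, h3⟩
    · obtain ⟨c, h1, h2, h3⟩ := hw2 e he
      exact ⟨c, h1, .inr h2, h3⟩
  choose w hwp hwe using hpath
  -- the edges determine the child vertex
  have hedge : ∀ c c', c ∈ f → c' ∈ f → s(c, par c) = s(c', par c') → c = c' := by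
    intro c c' hc hc' h
    rw [Sym2.eq_iff] at h
    rcases h with h | h
    · exact h.1
    · have h1 := hpar c (hfr c hc)
      have h2 := hpar c' (hfr c' hc')
      rw [h.2] at h1
      rw [← h.1] at h2
      omega
  have hτinj : ∀ k ∈ Itm T f, ∀ l ∈ Itm T f, m k ≠ k → m l ≠ l → τ k = τ l → k = l := by
    intro k hk l hl h1 h2 h3
    exact hKu (τ k) k l h1 h2 (hτ k hk) (h3 ▸ hτ l hl)
  have hmm : ∀ k ∈ Itm T f, m k ≠ k → m (m k) ≠ m k := by
    intro k hk h h1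
    rw [(hm k hk).2.1] at h1
    exact h h1.symm
  let _ : LinearOrder (V ⊕ V) := linearOrderOfSTO WellOrderingRel
  have hsame : ∀ k ∈ Itm T f, ∀ l ∈ Itm T f, k < m k → l < m l → ∀ t,
      (τ k = t ∨ τ (m k) = t) → (τ l = t ∨ τ (m l) = t) → k = l := by
    intro k hk l hl h1 h2 t h3 h4
    have hk1 := hmm k hk h1.ne'
    have hl1 := hmm l hl h2.ne'
    rcases h3 with h3 | h3 <;> rcases h4 with h4 | h4
    · exact hτinj k hk l hl h1.ne' h2.ne' (h3.trans h4.symm)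
    · have := hτinj k hk (m l) (hm l hl).1 h1.ne' hl1 (h3.trans h4.symm)
      rw [this, (hm l hl).2.1] at h1
      exact (lt_asymm h1 h2).elim
    · have := hτinj (m k) (hm k hk).1 l hl hk1 h2.ne' (h3.trans h4.symm)
      rw [← this, (hm k hk).2.1] at h2
      exact (lt_asymm h1 h2).elim
    · have := hτinj (m k) (hm k hk).1 (m l) (hm l hl).1 hk1 hl1 (h3.trans h4.symm)
      rw [← (hm k hk).2.1, this, (hm l hl).2.1]
  refine ⟨{p | ∃ k, ∃ hk : k ∈ Itm T f, k < m k ∧ p = ⟨τ k, τ (m k), w k hk⟩}, ?_, ?_, ?_⟩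
  · rintro _ ⟨k, hk, hlt, rfl⟩
    refine ⟨hwp k hk, ?_, (hτ k hk).1, (hτ _ (hm k hk).1).1⟩
    intro h
    exact hlt.ne (hτinj k hk _ (hm k hk).1 hlt.ne' (hmm k hk hlt.ne') h)
  · rintro _ ⟨k, hk, hlt, rfl⟩ _ ⟨l, hl, hlt', rfl⟩ hne e he he'
    obtain ⟨c, hc, h1, rfl⟩ := hwe k hk e he
    obtain ⟨c', hc', h2, h3⟩ := hwe l hl _ he'
    have := hedge c c' hc hc' h3
    subst this
    have hkl : k = l := by
      obtain ⟨t, ht⟩ := hTf c hc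
      refine hsame k hk l hl hlt hlt' t ?_ ?_
      · exact h1.imp (fun h => hTru _ _ _ h ht) (fun h => hTru _ _ _ h ht)
      · exact h2.imp (fun h => hTru _ _ _ h ht) (fun h => hTru _ _ _ h ht)
    subst hkl
    exact hne rfl
  · intro t ht
    obtain ⟨k, hk, hkt⟩ := hKe _ (Sum.inl t) t le_rfl ⟨ht, Relation.ReflTransGen.refl⟩
    have hkI := hTrI k t hkt
    have hτk : τ k = t := hTru k _ _ (hτ k hkI) hkt
    obtain ⟨l, hl, hll, hlt⟩ : ∃ l ∈ Itm T f, l < m l ∧ (τ l = t ∨ τ (m l) = t) := by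
      rcases lt_or_gt_of_ne hk with h | h
      · refine ⟨m k, (hm k hkI).1, ?_, .inr ?_⟩
        · rw [(hm k hkI).2.1]; exact h
        · rw [(hm k hkI).2.1]; exact hτk
      · exact ⟨k, hkI, h, .inl hτk⟩
    refine ⟨⟨τ l, τ (m l), w l hl⟩, ⟨⟨l, hl, hll, rfl⟩, hlt⟩, ?_⟩
    rintro _ ⟨⟨l', hl', hll', rfl⟩, hlt'⟩
    have := hsame l hl l' hl' hll hll' t hlt hlt'
    subst this
    rfl

theorem toggle_root {r : V} {par : V → V} {T f : Set V} (hg : Good r par T Set.univ f)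
    (hr : r ∈ f) : Good r par (symmDiff T {r}) Set.univ (f \ {r}) := by
  have hch : ∀ u, Ch r par (f \ {r}) u = Ch r par f u := by
    intro u; ext c
    exact ⟨fun ⟨h1, h2, h3⟩ => ⟨h1, h2, h3.1⟩, fun ⟨h1, h2, h3⟩ => ⟨h1, h2, h3, h1⟩⟩
  refine ⟨fun _ _ _ => trivial, fun _ _ => trivial, ?_, ?_⟩
  · intro u _ hfin
    have h1 := hg.loc u trivial (hch u ▸ hfin)
    unfold OddAt at h1 ⊢
    rw [hch u] at hfin ⊢
    simp only [hfin, true_and] at h1 ⊢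
    by_cases hu : u = r
    · subst hu
      simp only [Set.mem_sdiff, Set.mem_singleton_iff, Set.mem_symmDiff, not_true, and_false,
        true_and, false_or]
      tauto
    · simp only [Set.mem_sdiff, Set.mem_singleton_iff, Set.mem_symmDiff, hu, not_false_eq_true,
        and_true, false_and, or_false]
      exact h1
  · intro s hs
    exact hg.chain s fun n => ⟨(hs n).1.1, (hs n).2⟩

theorem join_or {G : SimpleGraph V} (hG : G.Connected) (T : Set V) (r : V) :
    G.HasTJoin T ∨ G.HasTJoin (symmDiff T {r}) := by
  have hex : ∀ v, ∃ p, v ≠ r → (G.dist r v = G.dist r p + 1 ∧ G.Adj v p) := by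
    intro v
    by_cases hv : v = r
    · exact ⟨v, fun h => (h hv).elim⟩
    · obtain ⟨w, hw⟩ := hG.exists_walk_length_eq_dist v r
      cases w with
      | nil => exact (hv rfl).elim
      | @cons _ p _ h q =>
        refine ⟨p, fun _ => ⟨?_, h⟩⟩
        rw [Walk.length_cons] at hw
        have h1 := SimpleGraph.dist_le q
        have h2 : G.dist v r ≤ G.dist p r + 1 := by
          obtain ⟨w', hw'⟩ := hG.exists_walk_length_eq_dist p r
          have := SimpleGraph.dist_le (Walk.cons h w')
          rw [Walk.length_cons] at this
          omega
        rw [G.dist_comm (u := r) (v := v), G.dist_comm (u := r) (v := p)]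
        omega
  choose par hp using hex
  obtain ⟨f, hf⟩ := exists_good r par (fun v => G.dist r v) (by simp) (fun v hv => (hp v hv).1) T
  by_cases hr : r ∈ f
  · exact .inr (join_of_good G (fun v hv => (hp v hv).1) (fun v hv => (hp v hv).2)
      (toggle_root hf hr) (by simp))
  · exact .inl (join_of_good G (fun v hv => (hp v hv).1) (fun v hv => (hp v hv).2) hf hr)

theorem odd_ncard_toggle (S : Set V) (hS : S.Finite) (r : V) :
    (symmDiff S {r}).Finite ∧ (Odd (symmDiff S {r}).ncard ↔ Even S.ncard) := by
  classical
  refine ⟨(hS.union (Set.finite_singleton r)).subset ?_, ?_⟩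
  · intro x hx
    rw [Set.mem_symmDiff] at hx
    exact hx.imp (fun h => h.1) (fun h => h.1)
  · by_cases hr : r ∈ S
    · have : symmDiff S {r} = S \ {r} := by
        ext x
        simp only [Set.mem_symmDiff, Set.mem_sdiff, Set.mem_singleton_iff]
        constructor
        · rintro (h | ⟨rfl, h⟩)
          · exact h
          · exact (h hr).elim
        · exact .inl
      rw [this, ← Set.ncard_sdiff_singleton_add_one hr hS, Nat.even_add_one]
      exact Nat.not_even_iff_odd.symm
    · have : symmDiff S {r} = insert r S := by
        ext x
        simp only [Set.mem_symmDiff, Set.mem_insert_iff, Set.mem_singleton_iff]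
        constructor
        · tauto
        · rintro (rfl | h)
          · exact .inr ⟨rfl, hr⟩
          · exact .inl ⟨h, fun hh => hr (hh ▸ h)⟩
      rw [this, Set.ncard_insert_of_notMem hr hS, Nat.odd_add_one, Nat.not_odd_iff_even]

theorem join_iff_even {G : SimpleGraph V} (hG : G.Connected) {T T' : Set V}
    (hf : (symmDiff T T').Finite) (he : Even (symmDiff T T').ncard) :
    G.HasTJoin T' ↔ G.HasTJoin T := by
  have he' := he.two_dvd
  obtain ⟨k, hk⟩ := he'
  constructor
  · intro h
    have := toggle_even hG k T' _ hf hk h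
    rwa [symmDiff_comm T T', symmDiff_symmDiff_cancel_left] at this
  · intro h
    have := toggle_even hG k T _ hf hk h
    rwa [symmDiff_symmDiff_cancel_left] at this

theorem join_iff_odd {G : SimpleGraph V} (hG : G.Connected) {T T' : Set V} (r : V)
    (hf : (symmDiff T T').Finite) (he : Odd (symmDiff T T').ncard) :
    G.HasTJoin T' ↔ G.HasTJoin (symmDiff T {r}) := by
  have h1 := odd_ncard_toggle (symmDiff T T') hf r
  have h2 : symmDiff (symmDiff T {r}) T' = symmDiff (symmDiff T T') {r} := symmDiff_right_comm _ _ _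
  rw [← h2] at h1
  refine join_iff_even hG h1.1 ?_
  rw [← Nat.not_odd_iff_even, h1.2, Nat.not_even_iff_odd]
  exact he

end TJ

/-- For every connected graph `G` and `T ⊆ V(G)`, exactly one of the alternatives (A), (B),
(C) holds. -/
theorem tJoin_trichotomy {V : Type*} (G : SimpleGraph V) (hG : G.Connected) (T : Set V) :
    (G.CaseA T ∧ ¬ G.CaseB T ∧ ¬ G.CaseC T) ∨
    (¬ G.CaseA T ∧ G.CaseB T ∧ ¬ G.CaseC T) ∨
    (¬ G.CaseA T ∧ ¬ G.CaseB T ∧ G.CaseC T) := by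
  obtain ⟨r⟩ := hG.nonempty
  have h0 := TJ.join_or hG T r
  have hev := fun T' hf he => TJ.join_iff_even (T' := T') (T := T) hG hf he
  have hod := fun T' hf he => TJ.join_iff_odd (T' := T') (T := T) hG r hf he
  -- test sets
  have hTf : (symmDiff T T).Finite := by rw [symmDiff_self]; exact Set.finite_empty
  have hTe : Even (symmDiff T T).ncard := by
    rw [symmDiff_self, Set.bot_eq_empty, Set.ncard_empty]; exact Even.zero
  have hrs : symmDiff T (symmDiff T {r}) = {r} := symmDiff_symmDiff_cancel_left _ _
  have hRf : (symmDiff T (symmDiff T {r})).Finite := by rw [hrs]; exact Set.finite_singleton r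
  have hRo : Odd (symmDiff T (symmDiff T {r})).ncard := by
    rw [hrs, Set.ncard_singleton]; exact odd_one
  have hA : G.CaseA T ↔ G.HasTJoin T ∧ G.HasTJoin (symmDiff T {r}) := by
    constructor
    · intro h; exact ⟨h T hTf, h _ hRf⟩
    · rintro ⟨h1, h2⟩ T' hf
      rcases Nat.even_or_odd (symmDiff T T').ncard with h | h
      · exact (hev T' hf h).2 h1
      · exact (hod T' hf h).2 h2
  have hB : G.CaseB T ↔ G.HasTJoin T ∧ ¬ G.HasTJoin (symmDiff T {r}) := by
    constructor
    · intro h; exact ⟨(h T hTf).1 hTe, (h _ hRf).2 hRo⟩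
    · rintro ⟨h1, h2⟩ T' hf
      exact ⟨fun h => (hev T' hf h).2 h1, fun h hh => h2 ((hod T' hf h).1 hh)⟩
  have hC : G.CaseC T ↔ ¬ G.HasTJoin T ∧ G.HasTJoin (symmDiff T {r}) := by
    constructor
    · intro h; exact ⟨(h T hTf).2 hTe, (h _ hRf).1 hRo⟩
    · rintro ⟨h1, h2⟩ T' hf
      exact ⟨fun h => (hod T' hf h).2 h2, fun h hh => h1 ((hev T' hf h).1 hh)⟩
  rw [hA, hB, hC]
  tauto
end

section
/- Let G be a connected graph and T ⊆ V(G). If G does not contain a T-join, then for every vertex u ∈ T, the graph G contains a (T \ {u})-join. -/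
namespace TJoinAux

/-- A partial matching on `T` such that, below every `w` crossed by a pair, everything else is
matched inside. -/
structure PM {V : Type*} (A : V → V → Prop) (T : Set V) (M : Set (V × V)) : Prop where
  mem : ∀ a b, (a, b) ∈ M → a ∈ T
  ne : ∀ a b, (a, b) ∈ M → a ≠ b
  symm : ∀ a b, (a, b) ∈ M → (b, a) ∈ M
  func : ∀ a b c, (a, b) ∈ M → (a, c) ∈ M → b = c
  inv : ∀ w a b, (a, b) ∈ M → A w a → ¬ A w b → ∀ t ∈ T, A w t →
    t = a ∨ ∃ s, (t, s) ∈ M ∧ A w s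

theorem exists_max {V : Type*} (A : V → V → Prop) (T : Set V) :
    ∃ M, Maximal (fun M => PM A T M) M := by
  refine zorn_subset {M | PM A T M} ?_
  intro c hc hch
  refine ⟨⋃₀ c, ?_, fun s hs => Set.subset_sUnion_of_mem hs⟩
  refine ⟨?_, ?_, ?_, ?_, ?_⟩
  · rintro a b ⟨M, hM, h⟩
    exact (hc hM).mem a b h
  · rintro a b ⟨M, hM, h⟩
    exact (hc hM).ne a b h
  · rintro a b ⟨M, hM, h⟩
    exact ⟨M, hM, (hc hM).symm a b h⟩
  · rintro a b d ⟨M, hM, h⟩ ⟨N, hN, h'⟩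
    rcases hch.total hM hN with hs | hs
    · exact (hc hN).func a b d (hs h) h'
    · exact (hc hM).func a b d h (hs h')
  · rintro w a b ⟨M, hM, h⟩ ha hb t ht hwt
    rcases (hc hM).inv w a b h ha hb t ht hwt with h1 | ⟨s, hs, h2⟩
    · exact Or.inl h1
    · exact Or.inr ⟨s, ⟨M, hM, hs⟩, h2⟩

/-- Kernel of an increasing map. -/
theorem exists_kernel {R : Type*} (n : R → R) (k : R → ℕ) (hk : ∀ t, k t < k (n t)) :
    ∃ D : R → Prop, ∀ t, D t ↔ ∀ s, n s = t → ¬ D s := by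
  have wf : WellFounded (fun a b : R => k a < k b) := (measure k).wf
  let F : (x : R) → ((y : R) → k y < k x → Prop) → Prop :=
    fun x ih => ∀ s, (h : n s = x) → ¬ ih s (h ▸ hk s)
  refine ⟨wf.fix F, fun t => ?_⟩
  rw [wf.fix_eq]

theorem core {V : Type*} (A : V → V → Prop) (d : V → ℕ) (u : V)
    (htrans : ∀ a b c, A a b → A b c → A a c)
    (hchain : ∀ a b t, A a t → A b t → A a b ∨ A b a)
    (hd : ∀ a b, A a b → d a ≤ d b)
    (hd' : ∀ a b, A a b → d a = d b → a = b) (hu : ∀ a, A u a) (T : Set V) :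
    ∃ M : Set (V × V), (∀ a b, (a, b) ∈ M → a ∈ T) ∧ (∀ a b, (a, b) ∈ M → a ≠ b) ∧
      (∀ a b, (a, b) ∈ M → (b, a) ∈ M) ∧ (∀ a b c, (a, b) ∈ M → (a, c) ∈ M → b = c) ∧
      ∀ w, ∀ a ∈ T, ∀ b ∈ T, A w a → A w b → (∀ s, (a, s) ∈ M → ¬ A w s) →
        (∀ s, (b, s) ∈ M → ¬ A w s) → a = b := by
  classical
  obtain ⟨M, hM⟩ := exists_max A T
  have hP : PM A T M := hM.prop
  set R : Set V := {t | t ∈ T ∧ ∀ s, (t, s) ∉ M} with hR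
  set B : Set V := {w | ∃ t ∈ R, ∃ t' ∈ R, t ≠ t' ∧ A w t ∧ A w t'} with hB
  -- no pair crosses a `w` with an unmatched element below
  have f1 : ∀ w, ∀ t ∈ R, A w t → ∀ a b, (a, b) ∈ M → A w a → A w b := by
    intro w t ht hwt a b hab ha
    by_contra hb
    rcases hP.inv w a b hab ha hb t ht.1 hwt with h | ⟨s, hs, -⟩
    · subst h; exact ht.2 b hab
    · exact ht.2 s hs
  have f2 : ∀ t ∈ R, ∀ t' ∈ R, t ≠ t' →
      ∃ w ∈ B, (A w t ∧ ¬ A w t') ∨ (¬ A w t ∧ A w t') := by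
    intro t ht t' ht' hne
    by_contra hcon
    push Not at hcon
    have key : ∀ w x, x ∈ R → A w x → ¬ w ∈ B → ∀ s ∈ T, A w s →
        s = x ∨ ∃ r, (s, r) ∈ M ∪ {(t, t'), (t', t)} ∧ A w r := by
      intro w x hx hwx hwB s hs hws
      by_cases hsR : s ∈ R
      · left
        by_contra hsx
        exact hwB ⟨s, hsR, x, hx, hsx, hws, hwx⟩
      · have : ∃ r, (s, r) ∈ M := by
          by_contra hno
          push Not at hno
          exact hsR ⟨hs, hno⟩
        obtain ⟨r, hr⟩ := this
        exact Or.inr ⟨r, Or.inl hr, f1 w x hx hwx s r hr hws⟩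
    have hnew : PM A T (M ∪ {(t, t'), (t', t)}) := by
      refine ⟨?_, ?_, ?_, ?_, ?_⟩
      · rintro a b (h | h)
        · exact hP.mem a b h
        · simp only [Set.mem_insert_iff, Set.mem_singleton_iff, Prod.mk.injEq] at h
          rcases h with ⟨rfl, rfl⟩ | ⟨rfl, rfl⟩
          · exact ht.1
          · exact ht'.1
      · rintro a b (h | h)
        · exact hP.ne a b h
        · simp only [Set.mem_insert_iff, Set.mem_singleton_iff, Prod.mk.injEq] at h
          rcases h with ⟨rfl, rfl⟩ | ⟨rfl, rfl⟩
          · exact hne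
          · exact hne.symm
      · rintro a b (h | h)
        · exact Or.inl (hP.symm a b h)
        · simp only [Set.mem_insert_iff, Set.mem_singleton_iff, Prod.mk.injEq] at h
          right
          simp only [Set.mem_insert_iff, Set.mem_singleton_iff, Prod.mk.injEq]
          tauto
      · have h1 := ht.2
        have h2 := ht'.2
        rintro a b c (h | h) (h' | h')
        · exact hP.func a b c h h'
        all_goals
          simp only [Set.mem_insert_iff, Set.mem_singleton_iff, Prod.mk.injEq] at h h'
          grind
      · rintro w a b (h | h) ha hb s hs hws
        · rcases hP.inv w a b h ha hb s hs hws with h1 | ⟨r, hr, h2⟩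
          · exact Or.inl h1
          · exact Or.inr ⟨r, Or.inl hr, h2⟩
        · simp only [Set.mem_insert_iff, Set.mem_singleton_iff, Prod.mk.injEq] at h
          rcases h with ⟨rfl, rfl⟩ | ⟨rfl, rfl⟩
          · refine key w a ht ha (fun hw => hb ((hcon w hw).1 ha)) s hs hws
          · refine key w a ht' ha (fun hw => ?_) s hs hws
            exact (hcon w hw).2 hb ha
    have := hM.le_of_ge hnew Set.subset_union_left
    exact ht.2 t' (this (Or.inr (by simp)))
  -- it suffices to pair up `R`
  suffices hG : ∃ N : Set (V × V), (∀ a b, (a, b) ∈ N → a ∈ R) ∧ (∀ a b, (a, b) ∈ N → a ≠ b) ∧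
      (∀ a b, (a, b) ∈ N → (b, a) ∈ N) ∧ (∀ a b c, (a, b) ∈ N → (a, c) ∈ N → b = c) ∧
      ∀ w, w ∈ B → ∀ a ∈ R, ∀ b ∈ R, A w a → A w b → (∀ s, (a, s) ∈ N → ¬ A w s) →
        (∀ s, (b, s) ∈ N → ¬ A w s) → a = b by
    obtain ⟨N, n1, n2, n3, n4, n5⟩ := hG
    refine ⟨M ∪ N, ?_, ?_, ?_, ?_, ?_⟩
    · rintro a b (h | h)
      · exact hP.mem a b h
      · exact (n1 a b h).1
    · rintro a b (h | h)
      · exact hP.ne a b h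
      · exact n2 a b h
    · rintro a b (h | h)
      · exact Or.inl (hP.symm a b h)
      · exact Or.inr (n3 a b h)
    · rintro a b c (h | h) (h' | h')
      · exact hP.func a b c h h'
      · exact absurd h ((n1 _ _ h').2 _)
      · exact absurd h' ((n1 _ _ h).2 _)
      · exact n4 a b c h h'
    · intro w a ha b hb hwa hwb sa sb
      have cross : ∀ x ∈ T, A w x → (∀ s, (x, s) ∈ M ∪ N → ¬ A w s) → x ∉ R →
          ∃ s, (x, s) ∈ M ∧ ¬ A w s := by
        intro x hx hwx hs hxR
        have : ∃ r, (x, r) ∈ M := by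
          by_contra hno
          push Not at hno
          exact hxR ⟨hx, hno⟩
        obtain ⟨r, hr⟩ := this
        exact ⟨r, hr, hs r (Or.inl hr)⟩
      by_cases haR : a ∈ R
      · by_cases hbR : b ∈ R
        · by_contra hab
          exact hab (n5 w ⟨a, haR, b, hbR, hab, hwa, hwb⟩ a haR b hbR hwa hwb
            (fun s hs => sa s (Or.inr hs)) (fun s hs => sb s (Or.inr hs)))
        · obtain ⟨s, hs, hws⟩ := cross b hb hwb sb hbR
          exact absurd (f1 w a haR hwa b s hs hwb) hws
      · obtain ⟨s, hs, hws⟩ := cross a ha hwa sa haR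
        rcases hP.inv w a s hs hwa hws b hb hwb with h | ⟨r, hr, hwr⟩
        · exact h.symm
        · exact absurd hwr (sb r (Or.inl hr))
  by_cases hsub : ∀ a ∈ R, ∀ b ∈ R, a = b
  · exact ⟨∅, by simp, by simp, by simp, by simp, fun w _ a ha b hb _ _ _ _ => hsub a ha b hb⟩
  push Not at hsub
  obtain ⟨a0, ha0, b0, hb0, hab0⟩ := hsub
  have huB : u ∈ B := ⟨a0, ha0, b0, hb0, hab0, hu _, hu _⟩
  -- anchors
  have hanc : ∀ t : V, ∃ x ∈ B, A x t ∧ ∀ w ∈ B, A w t → A w x := by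
    intro t
    have hfin : ∃ x, (x ∈ B ∧ A x t) ∧ ∀ w, (w ∈ B ∧ A w t) → d w ≤ d x := by
      have hne : ∃ m, ∃ x, (x ∈ B ∧ A x t) ∧ d t - d x = m := ⟨_, u, ⟨huB, hu t⟩, rfl⟩
      obtain ⟨x, hx, hxm⟩ := Nat.find_spec hne
      refine ⟨x, hx, fun w hw => ?_⟩
      have := Nat.find_min' hne ⟨w, hw, rfl⟩
      have h1 := hd _ _ hw.2
      have h2 := hd _ _ hx.2
      omega
    obtain ⟨x, ⟨hxB, hxt⟩, hmax⟩ := hfin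
    refine ⟨x, hxB, hxt, fun w hwB hwt => ?_⟩
    rcases hchain w x t hwt hxt with h | h
    · exact h
    · have := hd' x w h (le_antisymm (hd _ _ h) (hmax w ⟨hwB, hwt⟩))
      exact this ▸ h
  choose α αB αA αmax using hanc
  have αinj : ∀ t ∈ R, ∀ t' ∈ R, A (α t) t' → t ≠ t' → A (α t) (α t') ∧ d (α t) < d (α t') := by
    intro t ht t' ht' h hne
    have h1 : A (α t) (α t') := αmax t' _ (αB t) h
    refine ⟨h1, lt_of_le_of_ne (hd _ _ h1) fun he => ?_⟩
    have heq := hd' _ _ h1 he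
    obtain ⟨w, hwB, ⟨h2, h3⟩ | ⟨h2, h3⟩⟩ := f2 t ht t' ht' hne
    · exact h3 (htrans _ _ _ (αmax t w hwB h2) h)
    · exact h2 (htrans _ _ _ (heq ▸ αmax t' w hwB h3) (αA t))
  have hnext : ∀ t : R, ∃ t' : R, A (α t) (α t') ∧ d (α t) < d (α t') ∧
      ∀ s : R, A (α t) (α s) → d (α t) < d (α s) → d (α t') ≤ d (α s) := by
    intro t
    have hne : ∃ m, ∃ s : R, (A (α t) (α s) ∧ d (α t) < d (α s)) ∧ d (α s) = m := by
      obtain ⟨a, ha, b, hb, hab, haw, hbw⟩ := αB t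
      by_cases h : (t : V) = a
      · exact ⟨_, ⟨b, hb⟩, αinj t t.2 b hb hbw (h ▸ hab), rfl⟩
      · exact ⟨_, ⟨a, ha⟩, αinj t t.2 a ha haw h, rfl⟩
    obtain ⟨s, hs, hsm⟩ := Nat.find_spec hne
    exact ⟨s, hs.1, hs.2, fun r h1 h2 => hsm ▸ Nat.find_min' hne ⟨r, ⟨h1, h2⟩, rfl⟩⟩
  choose n nA nd nmin using hnext
  -- two elements whose arcs cross the same `w` coincide
  have ncross : ∀ s t : R, ∀ w, A (α s) w → A (α t) w → A w (α (n s)) → A w (α (n t)) →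
      d (α s) < d w → d (α t) < d w → s = t := by
    have half : ∀ s t : R, ∀ w, A (α s) w → A (α t) w → A w (α (n s)) →
      d (α t) < d w → A (α s) (α t) → s = t := by
      intro s t w h1 h2 h3 h5 h6
      by_contra hne
      have h7 := αinj s s.2 t t.2 (htrans _ _ _ h6 (αA t)) (fun h => hne (Subtype.ext h))
      have h8 := nmin s t h7.1 h7.2
      have h9 := hd _ _ h3
      omega
    intro s t w h1 h2 h3 h4 h5 h6
    rcases hchain _ _ _ h1 h2 with h | h
    · exact half s t w h1 h2 h3 h6 h
    · exact (half t s w h2 h1 h4 h5 h).symm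
  have ninj : ∀ s t : R, n s = n t → s = t := by
    intro s t h
    refine ncross s t (α (n s)) (nA s) (h ▸ nA t) ?_ ?_ (nd s) (h ▸ nd t)
    · exact αmax _ _ (αB _) (αA _)
    · rw [← h]; exact αmax _ _ (αB _) (αA _)
  obtain ⟨D, hD⟩ := exists_kernel n (fun t => d (α t)) nd
  have nne : ∀ t : R, n t ≠ t := fun t h => by
    have := nd t
    rw [h] at this
    omega
  have nD : ∀ t : R, D t → ¬ D (n t) := fun t h h' => (hD _).1 h' t rfl h
  set Q : R → R → Prop := fun a b => (D a ∧ b = n a) ∨ (D b ∧ a = n b) with hQ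
  have Qtot : ∀ a : R, ∃ b, Q a b := by
    intro a
    by_cases h : D a
    · exact ⟨n a, Or.inl ⟨h, rfl⟩⟩
    · rw [hD] at h
      push Not at h
      obtain ⟨s, hs, hs'⟩ := h
      exact ⟨s, Or.inr ⟨hs', hs.symm⟩⟩
  refine ⟨{p | ∃ (h1 : p.1 ∈ R) (h2 : p.2 ∈ R), Q ⟨p.1, h1⟩ ⟨p.2, h2⟩}, ?_, ?_, ?_, ?_, ?_⟩
  · rintro a b ⟨h1, -, -⟩
    exact h1
  · rintro a b ⟨h1, h2, h | h⟩ hab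
    · exact nne _ (h.2.symm.trans (Subtype.ext hab.symm))
    · exact nne _ (h.2.symm.trans (Subtype.ext hab))
  · rintro a b ⟨h1, h2, h⟩
    exact ⟨h2, h1, h.symm⟩
  · rintro a b c ⟨h1, h2, h⟩ ⟨h1', h2', h'⟩
    have : (⟨b, h2⟩ : R) = ⟨c, h2'⟩ := by
      rcases h with ⟨h, e⟩ | ⟨h, e⟩ <;> rcases h' with ⟨h', e'⟩ | ⟨h', e'⟩
      · exact e.trans e'.symm
      · exact absurd h (by have := nD _ h'; rw [← e'] at this; exact this)
      · exact absurd h' (by have := nD _ h; rw [← e] at this; exact this)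
      · exact ninj _ _ (e.symm.trans e')
    exact congrArg Subtype.val this
  · intro w hwB a ha b hb hwa hwb sa sb
    -- an element crossing `w` is `n s` with the arc of `s` crossing `w`
    have cr : ∀ x (hx : x ∈ R), A w x →
        (∀ s, (x, s) ∈ {p : V × V | ∃ (h1 : p.1 ∈ R) (h2 : p.2 ∈ R), Q ⟨p.1, h1⟩ ⟨p.2, h2⟩} →
          ¬ A w s) →
        ∃ s : R, n s = ⟨x, hx⟩ ∧ A (α s) w ∧ A w (α (n s)) ∧ d (α s) < d w := by
      intro x hx hwx hs
      obtain ⟨y, hy⟩ := Qtot ⟨x, hx⟩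
      have hny := hs y ⟨hx, y.2, hy⟩
      rcases hy with ⟨h, e⟩ | ⟨h, e⟩
      · exfalso
        apply hny
        have h1 := nA ⟨x, hx⟩
        rw [← e] at h1
        exact htrans _ _ _ (αmax x w hwB hwx) (htrans _ _ _ h1 (αA y))
      · have h1 : A w (α (n y)) := by rw [← e]; exact αmax x w hwB hwx
        have h3 : ¬ A w (α y) := fun h => hny (htrans _ _ _ h (αA y))
        have h2 : A (α y) w := by
          rcases hchain _ _ _ (nA y) h1 with h | h
          · exact h
          · exact absurd h h3
        refine ⟨y, e.symm, h2, h1, lt_of_le_of_ne (hd _ _ h2) fun he => h3 ?_⟩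
        have := hd' _ _ h2 he
        exact this ▸ h2
    obtain ⟨s, e, h1, h2, h3⟩ := cr a ha hwa sa
    obtain ⟨s', e', h1', h2', h3'⟩ := cr b hb hwb sb
    have := ncross s s' w h1 h1' h2 h2' h3 h3'
    subst this
    exact congrArg Subtype.val (e.symm.trans e')

open SimpleGraph in
theorem exists_par {V : Type*} (G : SimpleGraph V) (hG : G.Connected) (u : V) :
    ∃ par : V → V, par u = u ∧ ∀ v, v ≠ u → G.Adj v (par v) ∧ G.dist (par v) u + 1 = G.dist v u := by
  classical
  have : ∀ v, ∃ w, (v = u → w = u) ∧ (v ≠ u → G.Adj v w ∧ G.dist w u + 1 = G.dist v u) := by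
    intro v
    by_cases h : v = u
    · exact ⟨u, fun _ => rfl, fun h' => absurd h h'⟩
    · obtain ⟨p, hp⟩ := (hG.preconnected v u).exists_walk_length_eq_dist
      cases p with
      | nil => exact absurd rfl h
      | @cons _ w _ hadj q =>
        refine ⟨w, fun h' => absurd h' h, fun _ => ⟨hadj, ?_⟩⟩
        have h1 : G.dist w u ≤ q.length := dist_le q
        obtain ⟨r, hr⟩ := (hG.preconnected w u).exists_walk_length_eq_dist
        have h2 : G.dist v u ≤ (Walk.cons hadj r).length := dist_le _
        simp only [Walk.length_cons] at hp h2
        omega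
  choose par h1 h2 using this
  exact ⟨par, h1 u rfl, fun v hv => h2 v hv⟩

end TJoinAux

open SimpleGraph TJoinAux

theorem TJoinAux.of_pairing {V : Type*} (G : SimpleGraph V) (u : V) (par : V → V) (d : V → ℕ)
    (A : V → V → Prop) (hadj : ∀ v, v ≠ u → G.Adj v (par v) ∧ d (par v) + 1 = d v)
    (hd : ∀ a b, A a b → d a ≤ d b) (hd' : ∀ a b, A a b → d a = d b → a = b)
    (hu : ∀ a, A u a)
    (hpar : ∀ w a, w ≠ a → (A w a ↔ A w (par a))) (hrefl : ∀ a, A a a)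
    (T : Set V) (M : V → V → Prop) (m1 : ∀ a b, M a b → a ∈ T)
    (m2 : ∀ a b, M a b → a ≠ b) (m3 : ∀ a b, M a b → M b a)
    (m4 : ∀ a b c, M a b → M a c → b = c) (m5 : ∀ a ∈ T, ∃ b, M a b)
    (m6 : ∀ w a a' b b', M a a' → M b b' → A w a → ¬ A w a' → A w b → ¬ A w b' → a = b) :
    G.HasTJoin T := by
  classical
  have hwalk : ∀ n a b, d a + d b = n → ∃ p : G.Walk a b, ∀ e ∈ p.edges, ∃ w, w ≠ u ∧
      e = s(w, par w) ∧ ((A w a ∧ ¬ A w b) ∨ (¬ A w a ∧ A w b)) := by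
    intro n
    induction n with
    | zero =>
      intro a b h
      have e1 : a = u := (hd' u a (hu a) (by have := hd u a (hu a); omega)).symm
      have e2 : b = u := (hd' u b (hu b) (by have := hd u b (hu b); omega)).symm
      subst e1; subst e2
      exact ⟨Walk.nil, by simp⟩
    | succ n ih =>
      have main : ∀ a b, d a + d b = n + 1 → d b ≤ d a → ∃ p : G.Walk a b, ∀ e ∈ p.edges,
          ∃ w, w ≠ u ∧ e = s(w, par w) ∧ ((A w a ∧ ¬ A w b) ∨ (¬ A w a ∧ A w b)) := by
        intro a b h hle
        by_cases hab : a = b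
        · subst hab
          exact ⟨Walk.nil, by simp⟩
        have hau : a ≠ u := by
          rintro rfl
          exact hab (hd' _ _ (hu b) (le_antisymm (hd _ _ (hu b)) hle))
        have hnab : ¬ A a b := fun h' => hab (hd' _ _ h' (le_antisymm (hd _ _ h') hle))
        obtain ⟨ha1, ha2⟩ := hadj a hau
        obtain ⟨p, hp⟩ := ih (par a) b (by omega)
        refine ⟨Walk.cons ha1 p, fun e he => ?_⟩
        rw [Walk.edges_cons, List.mem_cons] at he
        rcases he with he | he
        · exact ⟨a, hau, he, Or.inl ⟨hrefl a, hnab⟩⟩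
        · obtain ⟨w, hw, hwe, hs⟩ := hp e he
          refine ⟨w, hw, hwe, ?_⟩
          have hwa : w ≠ a := by
            rintro rfl
            rcases hs with hs | hs
            · have := hd _ _ hs.1
              omega
            · exact hnab hs.2
          rw [hpar w a hwa]
          exact hs
      intro a b h
      rcases le_total (d b) (d a) with hle | hle
      · exact main a b h hle
      · obtain ⟨p, hp⟩ := main b a (by omega) hle
        refine ⟨p.reverse, fun e he => ?_⟩
        rw [Walk.edges_reverse, List.mem_reverse] at he
        obtain ⟨w, h1, h2, h3⟩ := hp e he
        exact ⟨w, h1, h2, by tauto⟩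
  have hpath : ∀ a b, ∃ p : G.Walk a b, p.IsPath ∧ ∀ e ∈ p.edges, ∃ w, w ≠ u ∧
      e = s(w, par w) ∧ ((A w a ∧ ¬ A w b) ∨ (¬ A w a ∧ A w b)) := by
    intro a b
    obtain ⟨p, hp⟩ := hwalk _ a b rfl
    exact ⟨p.bypass, p.bypass_isPath, fun e he => hp e (p.edges_bypass_subset_edges he)⟩
  choose π π1 π2 using hpath
  have hedge : ∀ w w', w ≠ u → w' ≠ u → s(w, par w) = s(w', par w') → w = w' := by
    intro w w' h h' he
    rw [Sym2.eq_iff] at he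
    rcases he with he | he
    · exact he.1
    · have h1 := (hadj w h).2
      have h2 := (hadj w' h').2
      rw [he.2] at h1
      rw [← he.1] at h2
      omega
  let r : V → V → Prop := WellOrderingRel
  have hr : IsWellOrder V r := WellOrderingRel.isWellOrder
  have rtri : ∀ a b, a ≠ b → r a b ∨ r b a := by
    intro a b h
    rcases trichotomous_of r a b with h1 | h1 | h1
    · exact Or.inl h1
    · exact absurd h1 h
    · exact Or.inr h1
  have rasymm : ∀ a b, r a b → ¬ r b a := fun a b h h' => asymm_of r h h'
  refine ⟨{p | ∃ a b, M a b ∧ r a b ∧ p = ⟨a, b, π a b⟩}, ?_, ?_, ?_⟩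
  · rintro p ⟨a, b, h, -, rfl⟩
    exact ⟨π1 a b, m2 a b h, m1 a b h, m1 b a (m3 a b h)⟩
  · rintro p ⟨a, b, h, hrab, rfl⟩ q ⟨a', b', h', hrab', rfl⟩ hne e he he'
    obtain ⟨w, w1, w2, w3⟩ := π2 a b e he
    obtain ⟨w', w1', w2', w3'⟩ := π2 a' b' e he'
    have hww := hedge w w' w1 w1' (w2.symm.trans w2')
    subst hww
    apply hne
    have hend : a = a' ∧ b = b' := by
      rcases w3 with ⟨x, y⟩ | ⟨x, y⟩ <;> rcases w3' with ⟨x', y'⟩ | ⟨x', y'⟩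
      · have := m6 w a b a' b' h h' x y x' y'
        subst this
        exact ⟨rfl, m4 _ _ _ h h'⟩
      · have := m6 w a b b' a' h (m3 _ _ h') x y y' x'
        subst this
        have := m4 _ _ _ h (m3 _ _ h')
        subst this
        exact absurd hrab' (rasymm _ _ hrab)
      · have := m6 w b a a' b' (m3 _ _ h) h' y x x' y'
        subst this
        have := m4 _ _ _ (m3 _ _ h) h'
        subst this
        exact absurd hrab' (rasymm _ _ hrab)
      · have := m6 w b a b' a' (m3 _ _ h) (m3 _ _ h') y x y' x'
        subst this
        exact ⟨m4 _ _ _ (m3 _ _ h) (m3 _ _ h'), rfl⟩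
    obtain ⟨rfl, rfl⟩ := hend
    rfl
  · intro t ht
    obtain ⟨b, hb⟩ := m5 t ht
    rcases rtri t b (m2 t b hb) with h | h
    · refine ⟨⟨t, b, π t b⟩, ⟨⟨t, b, hb, h, rfl⟩, Or.inl rfl⟩, ?_⟩
      rintro q ⟨⟨x, y, hxy, hr', rfl⟩, hq | hq⟩
      · dsimp only at hq
        subst hq
        have := m4 _ _ _ hb hxy
        subst this
        rfl
      · dsimp only at hq
        subst hq
        have := m4 _ _ _ hb (m3 _ _ hxy)
        subst this
        exact absurd hr' (rasymm _ _ h)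
    · refine ⟨⟨b, t, π b t⟩, ⟨⟨b, t, m3 _ _ hb, h, rfl⟩, Or.inr rfl⟩, ?_⟩
      rintro q ⟨⟨x, y, hxy, hr', rfl⟩, hq | hq⟩
      · dsimp only at hq
        subst hq
        have := m4 _ _ _ hb hxy
        subst this
        exact absurd hr' (rasymm _ _ h)
      · dsimp only at hq
        subst hq
        have := m4 _ _ _ hb (m3 _ _ hxy)
        subst this
        rfl

/-- If a connected graph `G` has no `T`-join, then it has a `(T \ {u})`-join for every
vertex `u ∈ T`. -/
theorem hasTJoin_diff_of_not_hasTJoin {V : Type*} (G : SimpleGraph V) (hG : G.Connected)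
    (T : Set V) (hT : ¬ G.HasTJoin T) (u : V) (hu : u ∈ T) :
    G.HasTJoin (T \ {u}) := by
  classical
  obtain ⟨par, paru, hadj⟩ := exists_par G hG u
  set d : V → ℕ := fun v => G.dist v u with hdd
  set A : V → V → Prop := fun w t => ∃ k, par^[k] t = w with hA
  have hd0 : ∀ v, d v = 0 → v = u := fun v h => by
    by_contra hv
    have := (hadj v hv).2
    simp only [hdd] at h
    omega
  have hdu : d u = 0 := by simp [hdd]
  have hit : ∀ k v, d (par^[k] v) = d v - k := by
    intro k
    induction k with
    | zero => intro v; simp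
    | succ k ih =>
      intro v
      rw [Function.iterate_succ_apply, ih]
      by_cases hv : v = u
      · subst hv
        rw [paru]
        omega
      · have : d (par v) + 1 = d v := (hadj v hv).2
        omega
  have iu : ∀ k, par^[k] u = u := fun k => Function.iterate_fixed paru k
  have htrans : ∀ a b c, A a b → A b c → A a c := by
    rintro a b c ⟨k, rfl⟩ ⟨l, rfl⟩
    exact ⟨k + l, Function.iterate_add_apply _ _ _ _⟩
  have hchain : ∀ a b t, A a t → A b t → A a b ∨ A b a := by
    rintro a b t ⟨k, rfl⟩ ⟨l, rfl⟩
    rcases le_total k l with h | h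
    · right
      exact ⟨l - k, by rw [← Function.iterate_add_apply, Nat.sub_add_cancel h]⟩
    · left
      exact ⟨k - l, by rw [← Function.iterate_add_apply, Nat.sub_add_cancel h]⟩
  have hd : ∀ a b, A a b → d a ≤ d b := by
    rintro a b ⟨k, rfl⟩
    rw [hit]
    omega
  have hd' : ∀ a b, A a b → d a = d b → a = b := by
    rintro a b ⟨k, rfl⟩ h
    rw [hit] at h
    by_cases hk : k = 0
    · subst hk; rfl
    · have := hd0 b (by omega)
      subst this
      exact iu k
  have hroot : ∀ a, A u a := fun a => ⟨d a, hd0 _ (by rw [hit]; omega)⟩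
  have hrefl : ∀ a, A a a := fun a => ⟨0, rfl⟩
  have hpar : ∀ w a, w ≠ a → (A w a ↔ A w (par a)) := by
    intro w a h
    constructor
    · rintro ⟨k, hk⟩
      cases k with
      | zero => exact absurd hk.symm h
      | succ k => exact ⟨k, by rwa [Function.iterate_succ_apply] at hk⟩
    · rintro ⟨k, hk⟩
      exact ⟨k + 1, by rwa [Function.iterate_succ_apply]⟩
  have hAu : ∀ w, A w u → w = u := by
    rintro w ⟨k, rfl⟩
    exact iu k
  obtain ⟨M, m1, m2, m3, m4, m5⟩ := core A d u htrans hchain hd hd' hroot T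
  have hnb : ∃ t0 ∈ T, ∀ s, (t0, s) ∉ M := by
    by_contra hcon
    push Not at hcon
    apply hT
    refine of_pairing G u par d A hadj hd hd' hroot hpar hrefl T (fun a b => (a, b) ∈ M)
      m1 m2 m3 m4 hcon ?_
    intro w a a' b b' h h' x y x' y'
    refine m5 w a (m1 _ _ h) b (m1 _ _ h') x x' ?_ ?_
    · intro s hs; rw [m4 _ _ _ hs h]; exact y
    · intro s hs; rw [m4 _ _ _ hs h']; exact y'
  obtain ⟨t0, ht0, hun⟩ := hnb
  have tot : ∀ a ∈ T, a ≠ t0 → ∃ b, (a, b) ∈ M := by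
    intro a ha hne
    by_contra hcon
    push Not at hcon
    exact hne (m5 u a ha t0 ht0 (hroot _) (hroot _) (fun s hs => absurd hs (hcon s))
      (fun s hs => absurd hs (hun s)))
  -- below a `w` containing `t0`, nothing else crosses
  have c0 : ∀ w a b, A w t0 → (a, b) ∈ M → A w a → A w b := by
    intro w a b hw hab hwa
    by_contra hwb
    have := m5 w a (m1 _ _ hab) t0 ht0 hwa hw (fun s hs => by rw [m4 _ _ _ hs hab]; exact hwb)
      (fun s hs => absurd hs (hun s))
    subst this
    exact hun b hab
  have c1 : ∀ w a a' b b', (a, a') ∈ M → (b, b') ∈ M → A w a → ¬ A w a' → A w b → ¬ A w b' →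
      a = b := by
    intro w a a' b b' h h' x y x' y'
    refine m5 w a (m1 _ _ h) b (m1 _ _ h') x x' ?_ ?_
    · intro s hs; rw [m4 _ _ _ hs h]; exact y
    · intro s hs; rw [m4 _ _ _ hs h']; exact y'
  by_cases htu : t0 = u
  · subst htu
    refine of_pairing G t0 par d A hadj hd hd' hroot hpar hrefl _ (fun a b => (a, b) ∈ M)
      ?_ m2 m3 m4 (fun a ha => tot a ha.1 ha.2) c1
    intro a b h
    exact ⟨m1 _ _ h, fun h' => hun b (by rw [← Set.mem_singleton_iff.1 h']; exact h)⟩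
  · obtain ⟨s, hs⟩ := tot u hu (Ne.symm htu)
    have hsu := m3 _ _ hs
    have hst0 : s ≠ t0 := by
      rintro rfl
      exact hun _ hsu
    have hsneu : s ≠ u := m2 _ _ hsu
    refine of_pairing G u par d A hadj hd hd' hroot hpar hrefl _
      (fun a b => ((a, b) ∈ M ∧ a ≠ u ∧ b ≠ u) ∨ (a = t0 ∧ b = s) ∨ (a = s ∧ b = t0))
      ?_ ?_ ?_ ?_ ?_ ?_
    · rintro a b (⟨h, h1, h2⟩ | ⟨rfl, rfl⟩ | ⟨rfl, rfl⟩)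
      · exact ⟨m1 _ _ h, h1⟩
      · exact ⟨ht0, htu⟩
      · exact ⟨m1 _ _ hsu, hsneu⟩
    · rintro a b (⟨h, h1, h2⟩ | ⟨rfl, rfl⟩ | ⟨rfl, rfl⟩)
      · exact m2 _ _ h
      · exact hst0.symm
      · exact hst0
    · rintro a b (⟨h, h1, h2⟩ | h | h)
      · exact Or.inl ⟨m3 _ _ h, h2, h1⟩
      · exact Or.inr (Or.inr h.symm)
      · exact Or.inr (Or.inl h.symm)
    · rintro a b c (⟨h, h1, h2⟩ | ⟨h, h1⟩ | ⟨h, h1⟩) (⟨h', h1', h2'⟩ | ⟨h', h1'⟩ | ⟨h', h1'⟩)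
      · exact m4 _ _ _ h h'
      · subst h'; exact absurd h (hun _)
      · subst h'; exact absurd (m4 _ _ _ h hsu) h2
      · subst h; exact absurd h' (hun _)
      · rw [h1, h1']
      · exact absurd (h'.symm.trans h) hst0
      · subst h; exact absurd (m4 _ _ _ h' hsu) h2'
      · exact absurd (h.symm.trans h') hst0
      · rw [h1, h1']
    · rintro a ⟨ha, hau⟩
      by_cases h : a = t0
      · exact ⟨s, Or.inr (Or.inl ⟨h, rfl⟩)⟩
      by_cases h' : a = s
      · exact ⟨t0, Or.inr (Or.inr ⟨h', rfl⟩)⟩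
      obtain ⟨b, hb⟩ := tot a ha h
      refine ⟨b, Or.inl ⟨hb, hau, ?_⟩⟩
      rintro rfl
      exact h' (m4 _ _ _ (m3 _ _ hb) hs)
    · intro w a a' b b' h h' x y x' y'
      have hwu : ¬ A w u := fun hw => by
        have := hAu w hw
        subst this
        exact y (hroot _)
      rcases h with ⟨h, h1, h2⟩ | ⟨h, h1⟩ | ⟨h, h1⟩ <;>
        rcases h' with ⟨h', h1', h2'⟩ | ⟨h', h1'⟩ | ⟨h', h1'⟩
      · exact c1 w a a' b b' h h' x y x' y'
      · subst h'; exact absurd (c0 w a a' x' h x) y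
      · subst h'; exact c1 w a a' b u h hsu x y x' hwu
      · subst h; exact absurd (c0 w b b' x h' x') y'
      · rw [h, h']
      · subst h; subst h1'; exact absurd x y'
      · subst h; exact c1 w a u b b' hsu h' x hwu x' y'
      · subst h'; subst h1; exact absurd x' y
      · rw [h, h']
end

section
/- Let G be a connected graph and T, T' ⊆ V(G) with T △ T' finite of odd cardinality. If G does not contain a T-join, then G contains a T'-join. -/
namespace TJ

open SimpleGraph

variable {V : Type*}

def RJ (G : SimpleGraph V) (T : Set V) (P : Set (Σ u : V, Σ v : V, G.Walk u v)) : Prop :=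
  (∀ p ∈ P, p.1 ≠ p.2.1 ∧ p.1 ∈ T ∧ p.2.1 ∈ T) ∧
  (∀ p ∈ P, ∀ q ∈ P, p ≠ q → (∀ e ∈ p.2.2.edges, e ∉ q.2.2.edges) ∧
    p.1 ≠ q.1 ∧ p.1 ≠ q.2.1 ∧ p.2.1 ≠ q.1 ∧ p.2.1 ≠ q.2.1) ∧
  (∀ t ∈ T, ∃ p ∈ P, p.1 = t ∨ p.2.1 = t)

theorem RJ.hasTJoin {G : SimpleGraph V} {T : Set V} {P : Set (Σ u : V, Σ v : V, G.Walk u v)}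
    (h : RJ G T P) : G.HasTJoin T := by
  classical
  obtain ⟨h1, h2, h3⟩ := h
  refine ⟨(fun p => ⟨p.1, p.2.1, p.2.2.bypass⟩) '' P, ?_, ?_, ?_⟩
  · rintro _ ⟨p, hp, rfl⟩
    exact ⟨p.2.2.bypass_isPath, h1 p hp⟩
  · rintro _ ⟨p, hp, rfl⟩ _ ⟨q, hq, rfl⟩ hne e he he'
    have hpq : p ≠ q := by
      rintro rfl
      exact hne rfl
    exact (h2 p hp q hq hpq).1 e (p.2.2.edges_bypass_subset_edges he) (q.2.2.edges_bypass_subset_edges he')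
  · intro t ht
    obtain ⟨p, hp, hpt⟩ := h3 t ht
    refine ⟨_, ⟨⟨p, hp, rfl⟩, hpt⟩, ?_⟩
    rintro _ ⟨⟨q, hq, rfl⟩, hqt⟩
    by_cases hpq : p = q
    · rw [hpq]
    · exfalso
      obtain ⟨-, a, b, c, d⟩ := h2 p hp q hq hpq
      dsimp only at hqt hpt
      rcases hpt with hpt | hpt <;> rcases hqt with hqt | hqt <;> subst hpt <;> simp_all

theorem RJ.even {G : SimpleGraph V} {T : Set V} {P : Set (Σ u : V, Σ v : V, G.Walk u v)}
    (h : RJ G T P) (hT : T.Finite) : Even T.ncard := by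
  obtain ⟨h1, h2, h3⟩ := h
  have e : T = (fun p : (Σ u : V, Σ v : V, G.Walk u v) => p.1) '' P ∪
      (fun p : (Σ u : V, Σ v : V, G.Walk u v) => p.2.1) '' P := by
    ext t
    constructor
    · intro ht
      obtain ⟨p, hp, hpt | hpt⟩ := h3 t ht
      · exact Or.inl ⟨p, hp, hpt⟩
      · exact Or.inr ⟨p, hp, hpt⟩
    · rintro (⟨p, hp, rfl⟩ | ⟨p, hp, rfl⟩)
      · exact (h1 p hp).2.1
      · exact (h1 p hp).2.2
  have i1 : Set.InjOn (fun p : (Σ u : V, Σ v : V, G.Walk u v) => p.1) P := by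
    intro p hp q hq hpq
    by_contra hne
    exact (h2 p hp q hq hne).2.1 hpq
  have i2 : Set.InjOn (fun p : (Σ u : V, Σ v : V, G.Walk u v) => p.2.1) P := by
    intro p hp q hq hpq
    by_contra hne
    exact (h2 p hp q hq hne).2.2.2.2 hpq
  have dj : Disjoint ((fun p : (Σ u : V, Σ v : V, G.Walk u v) => p.1) '' P)
      ((fun p : (Σ u : V, Σ v : V, G.Walk u v) => p.2.1) '' P) := by
    rw [Set.disjoint_left]
    rintro _ ⟨p, hp, rfl⟩ ⟨q, hq, hpq⟩
    by_cases hne : p = q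
    · subst hne
      exact (h1 p hp).1 hpq.symm
    · exact (h2 p hp q hq hne).2.2.1 hpq.symm
  have f1 := hT.subset (e ▸ Set.subset_union_left)
  have f2 := hT.subset (e ▸ Set.subset_union_right)
  rw [e, Set.ncard_union_eq dj f1 f2, i1.ncard_image, i2.ncard_image]
  exact ⟨_, rfl⟩

theorem even_symmDiff {A B : Set V} (hA : A.Finite) (hB : B.Finite) :
    Even (symmDiff A B).ncard ↔ (Even A.ncard ↔ Even B.ncard) := by
  have h1 := Set.ncard_inter_add_ncard_sdiff_eq_ncard A B hA
  have h2 := Set.ncard_inter_add_ncard_sdiff_eq_ncard B A hB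
  have h3 : (symmDiff A B).ncard = (A \ B).ncard + (B \ A).ncard := by
    rw [Set.symmDiff_def, Set.ncard_union_eq _ (hA.sdiff) (hB.sdiff)]
    exact disjoint_sdiff_sdiff
  rw [Set.inter_comm] at h2
  grind

def Conn (G : SimpleGraph V) (par : V → V) (E : Set V) (s t : V) : Prop :=
  ∃ w : G.Walk s t, ∀ e ∈ w.edges, ∃ x ∈ E, x ≠ par x ∧ e = s(x, par x)

theorem Conn.symm {G : SimpleGraph V} {par : V → V} {E : Set V} {s t : V}
    (h : Conn G par E s t) : Conn G par E t s := by
  obtain ⟨w, hw⟩ := h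
  exact ⟨w.reverse, by simpa using hw⟩

theorem Conn.trans {G : SimpleGraph V} {par : V → V} {E : Set V} {s t u : V}
    (h : Conn G par E s t) (h' : Conn G par E t u) : Conn G par E s u := by
  obtain ⟨w, hw⟩ := h
  obtain ⟨w', hw'⟩ := h'
  refine ⟨w.append w', ?_⟩
  intro e he
  rw [Walk.edges_append, List.mem_append] at he
  exact he.elim (hw e) (hw' e)

theorem Conn.mono {G : SimpleGraph V} {par : V → V} {E F : Set V} {s t : V}
    (h : Conn G par E s t) (hEF : E ⊆ F) : Conn G par F s t := by
  obtain ⟨w, hw⟩ := h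
  refine ⟨w, fun e he => ?_⟩
  obtain ⟨x, hx, h⟩ := hw e he
  exact ⟨x, hEF hx, h⟩

theorem Conn.up {G : SimpleGraph V} {par : V → V} (hpar : ∀ x, x ≠ par x → G.Adj x (par x))
    {E : Set V} {t : V} (k : ℕ) (hE : ∀ i < k, par^[i] t ∈ E) :
    Conn G par E t (par^[k] t) := by
  induction k with
  | zero => exact ⟨Walk.nil, by simp⟩
  | succ k ih =>
    refine (ih fun i hi => hE i (by omega)).trans ?_
    rw [Function.iterate_succ_apply']
    have hk := hE k (by omega)
    generalize par^[k] t = y at hk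
    by_cases hy : y = par y
    · rw [← hy]
      exact ⟨Walk.nil, by simp⟩
    · refine ⟨(hpar y hy).toWalk, ?_⟩
      intro e he
      refine ⟨y, hk, hy, by simpa using he⟩

def Anc (par : V → V) (u v : V) : Prop := ∃ k, par^[k] v = u

theorem Anc.refl (par : V → V) (u : V) : Anc par u u := ⟨0, rfl⟩

theorem Anc.trans {par : V → V} {u v w : V} (h : Anc par u v) (h' : Anc par v w) :
    Anc par u w := by
  obtain ⟨k, rfl⟩ := h
  obtain ⟨l, rfl⟩ := h'
  exact ⟨k + l, by rw [Function.iterate_add_apply]⟩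

theorem Anc.par {par : V → V} (v : V) : Anc par (par v) v := ⟨1, rfl⟩

theorem Anc.total {par : V → V} {u v w : V} (h : Anc par u w) (h' : Anc par v w) :
    Anc par u v ∨ Anc par v u := by
  obtain ⟨k, rfl⟩ := h
  obtain ⟨l, rfl⟩ := h'
  rcases le_total k l with hkl | hkl
  · right
    refine ⟨l - k, ?_⟩
    rw [← Function.iterate_add_apply]
    congr 2
    omega
  · left
    refine ⟨k - l, ?_⟩
    rw [← Function.iterate_add_apply]
    congr 2
    omega

theorem Anc.child {par : V → V} {u v : V} (h : Anc par u v) (hne : u ≠ v) :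
    ∃ c, par c = u ∧ c ≠ u ∧ Anc par c v := by
  obtain ⟨k, hk⟩ := h
  induction k with
  | zero => exact absurd hk.symm hne
  | succ k ih =>
    by_cases hc : par^[k] v = u
    · exact ih hc
    · exact ⟨par^[k] v, by rw [← hk, Function.iterate_succ_apply'], hc, k, rfl⟩

theorem Anc.of_ne {par : V → V} {u v : V} (h : Anc par u v) (hne : u ≠ v) :
    Anc par u (par v) := by
  obtain ⟨k, hk⟩ := h
  cases k with
  | zero => exact absurd hk.symm hne
  | succ k => exact ⟨k, by rw [← hk, Function.iterate_succ_apply]⟩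

theorem Conn.anc {G : SimpleGraph V} {par : V → V} (hpar : ∀ x, x ≠ par x → G.Adj x (par x))
    {E : Set V} {t u : V} (h : Anc par u t) (hE : ∀ x, Anc par x t → Anc par u x → x ≠ u → x ∈ E) :
    Conn G par E t u := by
  classical
  have hk := Nat.find_spec h
  have hm := fun i => Nat.find_min h (m := i)
  generalize Nat.find h = k at *
  have := Conn.up hpar (E := E) (t := t) k (by
    intro i hi
    refine hE _ ⟨i, rfl⟩ ⟨k - i, ?_⟩ (hm i hi)
    rw [← Function.iterate_add_apply, ← hk]
    congr 2
    omega)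
  rwa [hk] at this

def Val (G : SimpleGraph V) (par : V → V) (T D : Set V) (Q : Set (V × V × Set V)) : Prop :=
  (∀ q ∈ Q, q.1 ≠ q.2.1 ∧ q.1 ∈ T ∧ q.2.1 ∈ T ∧ q.2.2 ⊆ D ∧ Conn G par q.2.2 q.1 q.2.1) ∧
  (∀ q ∈ Q, ∀ q' ∈ Q, q ≠ q' → Disjoint q.2.2 q'.2.2 ∧
    q.1 ≠ q'.1 ∧ q.1 ≠ q'.2.1 ∧ q.2.1 ≠ q'.1 ∧ q.2.1 ≠ q'.2.1)

def Cov (Q : Set (V × V × Set V)) : Set V := {t | ∃ q ∈ Q, q.1 = t ∨ q.2.1 = t}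

theorem exists_max (G : SimpleGraph V) (par : V → V) (T : Set V) :
    ∃ (D : Set V) (Q : Set (V × V × Set V)), (∀ x, par x ∈ D → x ∈ D) ∧ Val G par T D Q ∧
      T ∩ D ⊆ Cov Q ∧
      ∀ (C : Set V) (Q' : Set (V × V × Set V)), C.Nonempty → C ⊆ Dᶜ →
        (∀ x, par x ∈ C → x ∈ C ∪ D) → Val G par (T \ Cov Q) C Q' →
        (T \ Cov Q) ∩ C ⊆ Cov Q' → False := by
  let S : Set (Set V × Set (V × V × Set V)) :=
    {z | (∀ x, par x ∈ z.1 → x ∈ z.1) ∧ Val G par T z.1 z.2 ∧ T ∩ z.1 ⊆ Cov z.2}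
  obtain ⟨⟨D, Q⟩, hm⟩ : ∃ m, Maximal (· ∈ S) m := by
    apply zorn_le₀
    intro c hcS hc
    refine ⟨(⋃ z ∈ c, z.1, ⋃ z ∈ c, z.2), ⟨?_, ⟨?_, ?_⟩, ?_⟩, ?_⟩
    · intro x hx
      simp only [Set.mem_iUnion] at hx ⊢
      obtain ⟨z, hz, hx⟩ := hx
      exact ⟨z, hz, (hcS hz).1 x hx⟩
    · intro q hq
      simp only [Set.mem_iUnion] at hq
      obtain ⟨z, hz, hq⟩ := hq
      obtain ⟨a, b, c', d, e⟩ := (hcS hz).2.1.1 q hq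
      exact ⟨a, b, c', d.trans (Set.subset_biUnion_of_mem (u := fun z => z.1) hz), e⟩
    · intro q hq q' hq' hne
      simp only [Set.mem_iUnion] at hq hq'
      obtain ⟨z, hz, hq⟩ := hq
      obtain ⟨z', hz', hq'⟩ := hq'
      rcases hc.total hz hz' with h | h
      · exact (hcS hz').2.1.2 q (h.2 hq) q' hq' hne
      · exact (hcS hz).2.1.2 q hq q' (h.2 hq') hne
    · rintro t ⟨ht, ht'⟩
      simp only [Set.mem_iUnion] at ht'
      obtain ⟨z, hz, ht'⟩ := ht'
      obtain ⟨q, hq, h⟩ := (hcS hz).2.2 ⟨ht, ht'⟩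
      exact ⟨q, Set.mem_biUnion (t := fun z => z.2) hz hq, h⟩
    · intro z hz
      exact ⟨Set.subset_biUnion_of_mem (u := fun z => z.1) hz,
        Set.subset_biUnion_of_mem (u := fun z => z.2) hz⟩
  obtain ⟨⟨h1, h2, h3⟩, hmax⟩ := hm
  dsimp only at h1 h2 h3
  refine ⟨D, Q, h1, h2, h3, ?_⟩
  intro C Q' hCn hCD hCc hV hcov
  have hmem : (D ∪ C, Q ∪ Q') ∈ S := by
    refine ⟨?_, ⟨?_, ?_⟩, ?_⟩
    · rintro x (hx | hx)
      · exact Or.inl (h1 x hx)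
      · exact (hCc x hx).symm
    · rintro q (hq | hq)
      · obtain ⟨a, b, c', d, e⟩ := h2.1 q hq
        exact ⟨a, b, c', d.trans Set.subset_union_left, e⟩
      · obtain ⟨a, b, c', d, e⟩ := hV.1 q hq
        exact ⟨a, b.1, c'.1, d.trans Set.subset_union_right, e⟩
    · have key : ∀ q ∈ Q, ∀ q' ∈ Q', Disjoint q.2.2 q'.2.2 ∧
          q.1 ≠ q'.1 ∧ q.1 ≠ q'.2.1 ∧ q.2.1 ≠ q'.1 ∧ q.2.1 ≠ q'.2.1 := by
        intro q hq q' hq'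
        obtain ⟨a, b, c', d, e⟩ := h2.1 q hq
        obtain ⟨a', b', c'', d', e'⟩ := hV.1 q' hq'
        refine ⟨?_, ?_, ?_, ?_, ?_⟩
        · rw [Set.disjoint_left]
          intro x hx hx'
          exact hCD (d' hx') (d hx)
        · intro h
          exact b'.2 ⟨q, hq, Or.inl h⟩
        · intro h
          exact c''.2 ⟨q, hq, Or.inl h⟩
        · intro h
          exact b'.2 ⟨q, hq, Or.inr h⟩
        · intro h
          exact c''.2 ⟨q, hq, Or.inr h⟩
      rintro q (hq | hq) q' (hq' | hq') hne
      · exact h2.2 q hq q' hq' hne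
      · exact key q hq q' hq'
      · obtain ⟨a, b, c, d, e⟩ := key q' hq' q hq
        exact ⟨a.symm, b.symm, d.symm, c.symm, e.symm⟩
      · exact hV.2 q hq q' hq' hne
    · rintro t ⟨ht, ht'⟩
      by_cases hc : t ∈ Cov Q
      · obtain ⟨q, hq, h⟩ := hc
        exact ⟨q, Or.inl hq, h⟩
      · rcases ht' with ht' | ht'
        · exact absurd (h3 ⟨ht, ht'⟩) hc
        · obtain ⟨q, hq, h⟩ := hcov ⟨⟨ht, hc⟩, ht'⟩
          exact ⟨q, Or.inr hq, h⟩
  have hle := hmax hmem ⟨Set.subset_union_left, Set.subset_union_left⟩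
  obtain ⟨x, hx⟩ := hCn
  exact hCD hx (hle.1 (Or.inr hx))


theorem anc_depth {par : V → V} {d : V → ℕ} (hd : ∀ x, x ≠ par x → d (par x) + 1 = d x)
    {u v : V} (h : Anc par u v) : ∃ k, par^[k] v = u ∧ d v = d u + k := by
  obtain ⟨k, hk⟩ := h
  induction k generalizing v with
  | zero => exact ⟨0, hk, by simp at hk; simp [hk]⟩
  | succ k ih =>
    rw [Function.iterate_succ_apply] at hk
    obtain ⟨l, hl, hl'⟩ := ih hk
    by_cases hv : v = par v
    · rw [← hv] at hl hl'
      exact ⟨l, hl, hl'⟩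
    · refine ⟨l + 1, by rw [Function.iterate_succ_apply, hl], ?_⟩
      have := hd v hv
      omega

theorem depth_le {par : V → V} {d : V → ℕ} (hd : ∀ x, x ≠ par x → d (par x) + 1 = d x)
    (i : ℕ) (x : V) : d x ≤ d (par^[i] x) + i := by
  induction i generalizing x with
  | zero => simp
  | succ i ih =>
    rw [Function.iterate_succ_apply]
    have := ih (par x)
    by_cases hv : x = par x
    · rw [← hv] at this ⊢
      omega
    · have := hd x hv
      omega

theorem anc_lt {par : V → V} {d : V → ℕ} (hd : ∀ x, x ≠ par x → d (par x) + 1 = d x)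
    {u v : V} (h : Anc par u v) (hne : u ≠ v) : d u < d v := by
  obtain ⟨k, hk, hk'⟩ := anc_depth hd h
  cases k with
  | zero => exact absurd hk.symm hne
  | succ k => omega

theorem anc_le {par : V → V} {d : V → ℕ} (hd : ∀ x, x ≠ par x → d (par x) + 1 = d x)
    {u v : V} (h : Anc par u v) : d u ≤ d v := by
  obtain ⟨k, hk, hk'⟩ := anc_depth hd h
  omega

theorem anc_antisymm {par : V → V} {d : V → ℕ} (hd : ∀ x, x ≠ par x → d (par x) + 1 = d x)
    {u v : V} (h : Anc par u v) (h' : Anc par v u) : u = v := by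
  by_contra hne
  have := anc_lt hd h hne
  have := anc_le hd h'
  omega

theorem rays {G : SimpleGraph V} {par : V → V} (hpar : ∀ x, x ≠ par x → G.Adj x (par x))
    {d : V → ℕ} (hd : ∀ x, x ≠ par x → d (par x) + 1 = d x)
    {B K : Set V} (hKB : K ⊆ B) (hB : ∀ x ∈ B, par x ∈ B)
    (hstep : ∀ v ∈ B, ∃ w ∈ K, Anc par v w ∧ w ≠ v) :
    ∃ (σ : V → V) (seg : V → Set V) (F : Set V), F ⊆ K ∧
      (∀ u ∈ F, σ u ∈ K ∧ σ u ≠ u ∧ seg u ⊆ B ∧ Conn G par (seg u) u (σ u)) ∧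
      (∀ u ∈ F, ∀ u' ∈ F, u ≠ u' → Disjoint (seg u) (seg u') ∧ σ u ≠ σ u') ∧
      (∀ u ∈ F, ∀ u' ∈ F, u ≠ σ u') ∧
      ∀ v ∈ K, v ∈ F ∨ ∃ u ∈ F, σ u = v := by
  classical
  have hBi : ∀ i, ∀ x ∈ B, par^[i] x ∈ B := by
    intro i
    induction i with
    | zero => exact fun x hx => hx
    | succ i ih =>
      intro x hx
      rw [Function.iterate_succ_apply]
      exact ih _ (hB x hx)
  let N : V → ℕ → Prop := fun v k => ∃ w ∈ K, par^[k] w = v ∧ d w = d v + k ∧ 0 < k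
  have hN : ∀ v ∈ B, ∃ k, N v k := by
    intro v hv
    obtain ⟨w, hw, ha, hne⟩ := hstep v hv
    obtain ⟨k, hk, hk'⟩ := anc_depth hd ha
    refine ⟨k, w, hw, hk, hk', ?_⟩
    have := anc_lt hd ha hne.symm
    omega
  let n : V → ℕ := fun v => sInf {k | N v k}
  have hf : ∀ v, ∃ c, v ∈ B → c ∈ B ∧ par c = v ∧ d c = d v + 1 ∧ (c ∈ K ∨ n c < n v) := by
    intro v
    by_cases hv : v ∈ B
    · obtain ⟨w, hw, h1, h2, h3⟩ : N v (n v) := Nat.sInf_mem (s := {k | N v k}) (hN v hv)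
      obtain ⟨k, hk⟩ : ∃ k, n v = k + 1 := ⟨n v - 1, by omega⟩
      rw [hk] at h1 h2
      have e1 := depth_le hd k w
      have e2 : par (par^[k] w) = v := by
        rw [← h1, Function.iterate_succ_apply']
      have e3 := depth_le hd 1 (par^[k] w)
      simp only [Function.iterate_one] at e3
      rw [e2] at e3
      refine ⟨par^[k] w, fun _ => ⟨hBi _ _ (hKB hw), e2, by omega, ?_⟩⟩
      cases k with
      | zero => exact Or.inl hw
      | succ k =>
        right
        have : n (par^[k+1] w) ≤ k + 1 := Nat.sInf_le ⟨w, hw, rfl, by omega, by omega⟩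
        omega
    · exact ⟨v, fun h => absurd h hv⟩
  choose f hf using hf
  have hfB : ∀ i, ∀ v ∈ B, f^[i] v ∈ B := by
    intro i
    induction i with
    | zero => exact fun x hx => hx
    | succ i ih =>
      intro x hx
      rw [Function.iterate_succ_apply]
      exact ih _ (hf x hx).1
  have hfd : ∀ i, ∀ v ∈ B, d (f^[i] v) = d v + i := by
    intro i v hv
    induction i with
    | zero => rfl
    | succ i ih =>
      rw [Function.iterate_succ_apply', (hf _ (hfB i v hv)).2.2.1, ih]
      omega
  have hpf : ∀ i j, ∀ v ∈ B, par^[i] (f^[i + j] v) = f^[j] v := by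
    intro i j v hv
    induction i with
    | zero => simp
    | succ i ih =>
      rw [Function.iterate_succ_apply, show i + 1 + j = (i + j) + 1 by omega,
        Function.iterate_succ_apply', (hf _ (hfB (i+j) v hv)).2.1, ih]
  have hm : ∀ k, ∀ v ∈ B, n v = k → ∃ m, 0 < m ∧ f^[m] v ∈ K := by
    intro k
    induction k using Nat.strong_induction_on with
    | _ k ih =>
      intro v hv hk
      rcases (hf v hv).2.2.2 with h | h
      · exact ⟨1, by omega, h⟩
      · obtain ⟨m, hm, hm'⟩ := ih (n (f v)) (by omega) (f v) (hf v hv).1 rfl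
        exact ⟨m + 1, by omega, by rwa [Function.iterate_succ_apply]⟩
  have hm : ∀ v, ∃ m, v ∈ B → 0 < m ∧ f^[m] v ∈ K ∧ ∀ i, 0 < i → i < m → f^[i] v ∉ K := by
    intro v
    by_cases hv : v ∈ B
    · have h := hm _ v hv rfl
      refine ⟨Nat.find h, fun _ => ⟨(Nat.find_spec h).1, (Nat.find_spec h).2, ?_⟩⟩
      intro i hi hlt hK
      exact Nat.find_min h hlt ⟨hi, hK⟩
    · exact ⟨0, fun h => absurd h hv⟩
  choose m hm using hm
  let σ : V → V := fun v => f^[m v] v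
  let seg : V → Set V := fun v => {x | ∃ i, 0 < i ∧ i ≤ m v ∧ f^[i] v = x}
  have hσd : ∀ v ∈ K, d v < d (σ v) := by
    intro v hv
    have := hfd (m v) v (hKB hv)
    have := (hm v (hKB hv)).1
    simp only [σ]
    omega
  have aux : ∀ u ∈ K, ∀ v ∈ K, ∀ i j, 0 < i → i ≤ j → j ≤ m v → f^[i] u = f^[j] v → u = v := by
    intro u hu v hv i j hi hij hj he
    obtain ⟨l, rfl⟩ := Nat.exists_eq_add_of_le hij
    have e1 : f^[0] u = par^[i] (f^[i+0] u) := (hpf i 0 u (hKB hu)).symm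
    rw [add_zero, he, hpf i l v (hKB hv)] at e1
    by_cases hl : l = 0
    · subst hl
      exact e1
    · exact absurd (e1 ▸ hu : f^[l] v ∈ K) ((hm v (hKB hv)).2.2 l (by omega) (by omega))
  have hdisj : ∀ u ∈ K, ∀ v ∈ K, u ≠ v → Disjoint (seg u) (seg v) := by
    intro u hu v hv hne
    rw [Set.disjoint_left]
    rintro x ⟨i, hi, hi', hx⟩ ⟨j, hj, hj', hx'⟩
    rcases le_total i j with h | h
    · exact hne (aux u hu v hv i j hi h hj' (hx.trans hx'.symm))
    · exact hne (aux v hv u hu j i hj h hi' (hx'.trans hx.symm)).symm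
  have hinj : ∀ u ∈ K, ∀ v ∈ K, σ u = σ v → u = v := by
    intro u hu v hv he
    by_contra hne
    have hdj := Set.disjoint_left.1 (hdisj u hu v hv hne)
    exact @hdj (σ u)
      ⟨m u, (hm u (hKB hu)).1, le_rfl, rfl⟩ ⟨m v, (hm v (hKB hv)).1, le_rfl, he.symm⟩
  obtain ⟨c, hc⟩ : ∃ c : V → Prop, ∀ v, c v ↔ ∃ u, ∃ _ : d u < d v, u ∈ K ∧ σ u = v ∧ ¬ c u := by
    let wf := (measure d).wf
    refine ⟨wf.fix (C := fun _ => Prop)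
      (fun v ih => ∃ u, ∃ h : d u < d v, u ∈ K ∧ σ u = v ∧ ¬ ih u h), ?_⟩
    intro v
    rw [wf.fix_eq]
  have hcσ : ∀ u ∈ K, (c (σ u) ↔ ¬ c u) := by
    intro u hu
    rw [hc (σ u)]
    constructor
    · rintro ⟨v, _, hv, he, hcv⟩
      rwa [← hinj v hv u hu he]
    · intro h
      exact ⟨u, hσd u hu, hu, rfl, h⟩
  refine ⟨σ, seg, {u | u ∈ K ∧ ¬ c u}, fun u hu => hu.1, ?_, ?_, ?_, ?_⟩
  · rintro u ⟨hu, hcu⟩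
    refine ⟨(hm u (hKB hu)).2.1, ?_, ?_, ?_⟩
    · intro h
      have := hσd u hu
      rw [h] at this
      omega
    · rintro x ⟨i, -, -, rfl⟩
      exact hfB i u (hKB hu)
    · apply Conn.symm
      have := Conn.up hpar (E := seg u) (t := σ u) (m u) (by
        intro i hi
        refine ⟨m u - i, by omega, by omega, ?_⟩
        rw [← hpf i (m u - i) u (hKB hu)]
        simp only [σ]
        congr 2
        omega)
      have e := hpf (m u) 0 u (hKB hu)
      simp only [add_zero, Function.iterate_zero, id] at e
      simp only [σ] at this ⊢
      rwa [e] at this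
  · rintro u ⟨hu, hcu⟩ v ⟨hv, hcv⟩ hne
    exact ⟨hdisj u hu v hv hne, fun h => hne (hinj u hu v hv h)⟩
  · rintro u ⟨hu, hcu⟩ v ⟨hv, hcv⟩ rfl
    exact hcu ((hcσ v hv).2 hcv)
  · intro v hv
    by_cases hcv : c v
    · right
      obtain ⟨u, _, hu, he, hcu⟩ := (hc v).1 hcv
      exact ⟨u, ⟨hu, hcu⟩, he⟩
    · exact Or.inl ⟨hv, hcv⟩


theorem tree {G : SimpleGraph V} {par : V → V} (hpar : ∀ x, x ≠ par x → G.Adj x (par x))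
    {d : V → ℕ} (hd : ∀ x, x ≠ par x → d (par x) + 1 = d x) (r : V) (T : Set V)
    (hT : ∀ t ∈ T, Anc par r t) :
    ∃ Q, Val G par T Set.univ Q ∧ (T \ Cov Q).Subsingleton := by
  classical
  obtain ⟨D, Q, hD, hV, hcov, hmax⟩ := exists_max G par T
  refine ⟨Q, ⟨fun q hq => ?_, hV.2⟩, ?_⟩
  · obtain ⟨a, b, c, d, e⟩ := hV.1 q hq
    exact ⟨a, b, c, Set.subset_univ _, e⟩
  generalize hU : T \ Cov Q = U at hmax ⊢
  have hUT : ∀ t ∈ U, t ∈ T := by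
    intro t ht
    rw [← hU] at ht
    exact ht.1
  have hUD : ∀ t ∈ U, t ∉ D := by
    intro t ht htD
    have h1 := hUT t ht
    rw [← hU] at ht
    exact ht.2 (hcov ⟨h1, htD⟩)
  have hDa : ∀ u v, Anc par u v → u ∈ D → v ∈ D := by
    rintro u v ⟨k, rfl⟩
    induction k generalizing v with
    | zero => exact fun h => h
    | succ k ih =>
      intro h
      rw [Function.iterate_succ_apply] at h
      exact hD _ (ih _ h)
  let R : V → Set V := fun v => {x | x ∉ D ∧ Anc par v x}
  have hRD : ∀ v, R v ⊆ Dᶜ := fun v x hx => hx.1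
  have hRc : ∀ v x, par x ∈ R v → x ∈ R v ∪ D := by
    intro v x hx
    by_cases hxD : x ∈ D
    · exact Or.inr hxD
    · exact Or.inl ⟨hxD, hx.2.trans (Anc.par x)⟩
  have hconn : ∀ x t, t ∉ D → x ≠ par x → Anc par x t → Conn G par (R x) t (par x) := by
    intro x t ht hxp hxt
    refine Conn.anc hpar ((Anc.par x).trans hxt) ?_
    intro y hyt hxy hne
    have hay : Anc par x y := by
      rcases Anc.total hxt hyt with h | h
      · exact h
      · by_cases he : y = x
        · rw [he]
          exact Anc.refl _ _
        · have := anc_antisymm hd (h.of_ne he) hxy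
          exact absurd this hne
    exact ⟨fun h => ht (hDa y t hyt h), hay⟩
  have hne : ∀ v, v ∉ D → ∃ t ∈ U, Anc par v t := by
    intro v hv
    by_contra hcon
    push Not at hcon
    refine hmax (R v) ∅ ⟨v, hv, Anc.refl _ _⟩ (hRD v) (hRc v) ⟨by simp, by simp⟩ ?_
    rintro t ⟨ht, ht'⟩
    exact absurd ht'.2 (hcon t ht)
  have hpair : ∀ (C : Set V) (s t : V), C.Nonempty → C ⊆ Dᶜ →
        (∀ x, par x ∈ C → x ∈ C ∪ D) → s ∈ U → t ∈ U → s ≠ t → Conn G par C s t →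
        (∀ x ∈ U, x ∈ C → x = s ∨ x = t) → False := by
    intro C s t h1 h2 h3 hs ht hst hc hall
    refine hmax C {(s, t, C)} h1 h2 h3 ⟨?_, ?_⟩ ?_
    · rintro q rfl
      exact ⟨hst, hs, ht, subset_rfl, hc⟩
    · rintro q rfl q' rfl h
      exact absurd rfl h
    · rintro x ⟨hx, hx'⟩
      exact ⟨_, rfl, (hall x hx hx').imp Eq.symm Eq.symm⟩
  let B : Set V := {v | v ∉ D ∧ ∃ t1 ∈ U, ∃ t2 ∈ U, t1 ≠ t2 ∧ Anc par v t1 ∧ Anc par v t2}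
  have hsmall : ∀ v, v ∉ D → v ∉ B → ∃ t ∈ U, Anc par v t ∧ ∀ t' ∈ U, Anc par v t' → t' = t := by
    intro v hv hvB
    obtain ⟨t, ht, hvt⟩ := hne v hv
    refine ⟨t, ht, hvt, ?_⟩
    intro t' ht' hvt'
    by_contra hcon
    exact hvB ⟨hv, t', ht', t, ht, hcon, hvt', hvt⟩
  have hBa : ∀ u v, Anc par u v → v ∈ B → u ∈ B := by
    rintro u v huv ⟨hv, t1, h1, t2, h2, h12, ha1, ha2⟩
    exact ⟨fun h => hv (hDa u v huv h), t1, h1, t2, h2, h12, huv.trans ha1, huv.trans ha2⟩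
  have hsib : ∀ x y, x ∉ D → y ∉ D → x ∉ B → y ∉ B → x ≠ par x → y ≠ par y → par x = par y →
      x = y := by
    intro x y hx hy hxB hyB hxp hyp hxy
    by_contra hxne
    obtain ⟨t, ht, hxt, htu⟩ := hsmall x hx hxB
    obtain ⟨s, hs, hys, hsu⟩ := hsmall y hy hyB
    refine hpair (R x ∪ R y) t s ⟨x, Or.inl ⟨hx, Anc.refl _ _⟩⟩
      (Set.union_subset (hRD x) (hRD y)) ?_ ht hs ?_ ?_ ?_
    · rintro z (hz | hz)
      · exact (hRc x z hz).imp Or.inl id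
      · exact (hRc y z hz).imp Or.inr id
    · rintro rfl
      rcases Anc.total hxt hys with h | h
      · have h1 := anc_le hd (h.of_ne hxne)
        have h2 := hd x hxp
        rw [hxy] at h2
        omega
      · have h1 := anc_le hd (h.of_ne (Ne.symm hxne))
        have h2 := hd y hyp
        rw [← hxy] at h2
        omega
    · have c1 := (hconn x t (hUD t ht) hxp hxt).mono (Set.subset_union_left (t := R y))
      have c2 := (hconn y s (hUD s hs) hyp hys).mono (Set.subset_union_right (s := R x))
      rw [hxy] at c1
      exact c1.trans c2.symm
    · rintro z hz (hz' | hz')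
      · exact Or.inl (htu z hz hz'.2)
      · exact Or.inr (hsu z hz hz'.2)
  have hown : ∀ x, x ∉ D → x ∉ B → x ≠ par x → par x ∉ U := by
    intro x hx hxB hxp hpU
    obtain ⟨t, ht, hxt, htu⟩ := hsmall x hx hxB
    refine hpair (R x) t (par x) ⟨x, hx, Anc.refl _ _⟩ (hRD x) (hRc x) ht hpU ?_
      (hconn x t (hUD t ht) hxp hxt) ?_
    · intro h
      rw [h] at hxt
      have h1 := anc_le hd hxt
      have h2 := hd x hxp
      omega
    · intro z hz hz'
      exact Or.inl (htu z hz hz'.2)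
  have hBchild : ∀ v ∈ B, ∃ c ∈ B, par c = v ∧ c ≠ v := by
    rintro v ⟨hv, t1, h1, t2, h2, h12, ha1, ha2⟩
    have key : ∀ t ∈ U, t ≠ v → Anc par v t → ∃ c, c ∉ D ∧ par c = v ∧ c ≠ v ∧ Anc par c t := by
      intro t ht htv hat
      obtain ⟨c, hc1, hc2, hc3⟩ := hat.child htv.symm
      exact ⟨c, fun h => hUD t ht (hDa _ _ hc3 h), hc1, hc2, hc3⟩
    have key2 : v ∈ U → ∀ t ∈ U, t ≠ v → Anc par v t → ∃ c ∈ B, par c = v ∧ c ≠ v := by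
      intro hvU t ht htv hat
      obtain ⟨c, hc0, hc1, hc2, hc3⟩ := key t ht htv hat
      refine ⟨c, ?_, hc1, hc2⟩
      by_contra hcB
      exact hown c hc0 hcB (by rw [hc1]; exact hc2) (by rwa [hc1])
    by_cases e1 : t1 = v
    · subst e1
      exact key2 h1 t2 h2 (Ne.symm h12) ha2
    by_cases e2 : t2 = v
    · subst e2
      exact key2 h2 t1 h1 h12 ha1
    obtain ⟨c, hc0, hc1, hc2, hc3⟩ := key t1 h1 e1 ha1
    obtain ⟨c', hc0', hc1', hc2', hc3'⟩ := key t2 h2 e2 ha2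
    by_cases hcB : c ∈ B
    · exact ⟨c, hcB, hc1, hc2⟩
    by_cases hcB' : c' ∈ B
    · exact ⟨c', hcB', hc1', hc2'⟩
    have hcc := hsib c c' hc0 hc0' hcB hcB' (by rw [hc1]; exact hc2) (by rw [hc1']; exact hc2')
      (hc1.trans hc1'.symm)
    subst hcc
    exact absurd ⟨hc0, t1, h1, t2, h2, h12, hc3, hc3'⟩ hcB
  let H : V → Set V := fun v => {x | x ∉ D ∧ ∃ y, y ∉ D ∧ y ∉ B ∧ par y = v ∧ y ≠ v ∧ Anc par y x}
  have hHB : ∀ v, ∀ x ∈ H v, x ∉ B := by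
    rintro v x ⟨hx, y, hy, hyB, -, -, hyx⟩ hxB
    exact hyB (hBa y x hyx hxB)
  have hHu : ∀ v ∈ B, ∀ v' ∈ B, ∀ x, x ∈ H v → x ∈ H v' → v = v' := by
    have aux : ∀ v' ∈ B, ∀ y y', y ∉ B → par y' = v' → Anc par y y' → y = y' := by
      intro v' hv' y y' hy hp ha
      by_contra hcon
      have := ha.of_ne hcon
      rw [hp] at this
      exact hy (hBa _ _ this hv')
    rintro v hv v' hv' x ⟨hx, y, hy, hyB, hyp, hyv, hyx⟩ ⟨-, y', hy', hyB', hyp', hyv', hyx'⟩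
    rcases Anc.total hyx hyx' with h | h
    · rw [← hyp, ← hyp', aux v' hv' y y' hyB hyp' h]
    · rw [← hyp, ← hyp', aux v hv y' y hyB' hyp h]
  let tok : V → V → Prop := fun v t => t ∈ U ∧ (t = v ∨ t ∈ H v)
  have htokv : ∀ v ∈ B, ∀ v' ∈ B, ∀ t, tok v t → tok v' t → v = v' := by
    rintro v hv v' hv' t ⟨ht, h1⟩ ⟨-, h2⟩
    rcases h1 with h1 | h1 <;> rcases h2 with h2 | h2
    · exact h1.symm.trans h2
    · exact absurd (h1 ▸ hv) (hHB _ _ h2)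
    · exact absurd (h2 ▸ hv') (hHB _ _ h1)
    · exact hHu v hv v' hv' t h1 h2
  have htokt : ∀ v ∈ B, ∀ t t', tok v t → tok v t' → t = t' := by
    rintro v hv t t' ⟨ht, h1⟩ ⟨ht', h2⟩
    have own : v ∈ U → ∀ x, x ∉ H v := by
      rintro hvU x ⟨hx, y, hy, hyB, hyp, hyv, hyx⟩
      exact hown y hy hyB (by rw [hyp]; exact hyv) (by rwa [hyp])
    rcases h1 with h1 | h1 <;> rcases h2 with h2 | h2
    · exact h1.trans h2.symm
    · exact absurd h2 (own (h1 ▸ ht) _)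
    · exact absurd h1 (own (h2 ▸ ht') _)
    · obtain ⟨hx, y, hy, hyB, hyp, hyv, hyx⟩ := h1
      obtain ⟨hx', y', hy', hyB', hyp', hyv', hyx'⟩ := h2
      have := hsib y y' hy hy' hyB hyB' (by rw [hyp]; exact hyv) (by rw [hyp']; exact hyv')
        (hyp.trans hyp'.symm)
      subst this
      obtain ⟨s, hs, -, hsu⟩ := hsmall y hy hyB
      rw [hsu t ht hyx, hsu t' ht' hyx']
  have hanchor : ∀ v ∈ B, ∀ t ∈ U, Anc par v t → ∃ w ∈ B, Anc par v w ∧ tok w t := by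
    intro v hv t ht hvt
    have aux : ∀ k, ∀ v ∈ B, Anc par v t → d t - d v = k → ∃ w ∈ B, Anc par v w ∧ tok w t := by
      intro k
      induction k using Nat.strong_induction_on with
      | _ k ih =>
        intro v hv hvt hk
        by_cases e : v = t
        · exact ⟨v, hv, Anc.refl _ _, ht, Or.inl e.symm⟩
        obtain ⟨c, hc1, hc2, hc3⟩ := hvt.child e
        have hcD : c ∉ D := fun h => hUD t ht (hDa _ _ hc3 h)
        by_cases hcB : c ∈ B
        · have l1 := anc_le hd hc3
          have l2 := hd c (by rw [hc1]; exact hc2)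
          rw [hc1] at l2
          obtain ⟨w, hw, hw1, hw2⟩ := ih (d t - d c) (by omega) c hcB hc3 rfl
          exact ⟨w, hw, (hc1 ▸ Anc.par c : Anc par v c).trans hw1, hw2⟩
        · exact ⟨v, hv, Anc.refl _ _, ht, Or.inr ⟨hUD t ht, c, hcD, hcB, hc1, hc2, hc3⟩⟩
    exact aux _ v hv hvt rfl
  have htokc : ∀ v ∈ B, ∀ t, tok v t → Conn G par (H v) t v := by
    rintro v hv t ⟨ht, rfl | ⟨hx, y, hy, hyB, hyp, hyv, hyx⟩⟩
    · exact ⟨Walk.nil, by simp⟩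
    · have := hconn y t hx (by rw [hyp]; exact hyv) hyx
      rw [hyp] at this
      refine this.mono ?_
      rintro z ⟨hz, hyz⟩
      exact ⟨hz, y, hy, hyB, hyp, hyv, hyz⟩
  let K : Set V := {v | v ∈ B ∧ ∃ t, tok v t}
  have hr : r ∉ B := by
    intro hrB
    obtain ⟨σ, seg, F, hFK, hF1, hF2, hF3, hF4⟩ := rays hpar hd (B := B) (K := K)
      (fun v hv => hv.1) (fun x hx => hBa _ _ (Anc.par x) hx) (by
        intro v hv
        obtain ⟨c, hcB, hc1, hc2⟩ := hBchild v hv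
        obtain ⟨t, ht, hct⟩ := hne c hcB.1
        obtain ⟨w, hw, hcw, hwt⟩ := hanchor c hcB t ht hct
        refine ⟨w, ⟨hw, t, hwt⟩, (hc1 ▸ Anc.par c : Anc par v c).trans hcw, ?_⟩
        rintro rfl
        have l1 := anc_le hd hcw
        have l2 := hd c (by rw [hc1]; exact hc2)
        rw [hc1] at l2
        omega)
    have hτ : ∀ v, ∃ t, v ∈ K → tok v t := by
      intro v
      by_cases hv : v ∈ K
      · obtain ⟨t, ht⟩ := hv.2
        exact ⟨t, fun _ => ht⟩
      · exact ⟨v, fun h => absurd h hv⟩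
    choose τ hτ using hτ
    have hτi : ∀ u ∈ K, ∀ v ∈ K, u ≠ v → τ u ≠ τ v := by
      intro u hu v hv hne he
      exact hne (htokv u hu.1 v hv.1 (τ u) (hτ u hu) (he ▸ hτ v hv))
    refine hmax Dᶜ ((fun u => (τ u, τ (σ u), seg u ∪ (H u ∪ H (σ u)))) '' F) ⟨r, hrB.1⟩ subset_rfl
      ?_ ⟨?_, ?_⟩ ?_
    · intro x _
      exact (em (x ∈ D)).symm
    · rintro _ ⟨u, hu, rfl⟩
      obtain ⟨k1, k2, k3, k4⟩ := hF1 u hu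
      have hu' := hFK hu
      refine ⟨hτi u hu' _ k1 k2.symm, (hτ u hu').1, (hτ _ k1).1, ?_, ?_⟩
      · rintro x (hx | hx | hx)
        · exact (k3 hx).1
        · exact hx.1
        · exact hx.1
      · have c1 := (htokc u hu'.1 _ (hτ u hu')).mono
          (show H u ⊆ seg u ∪ (H u ∪ H (σ u)) from fun x hx => Or.inr (Or.inl hx))
        have c2 := (htokc _ k1.1 _ (hτ _ k1)).mono
          (show H (σ u) ⊆ seg u ∪ (H u ∪ H (σ u)) from fun x hx => Or.inr (Or.inr hx))
        have c3 := k4.mono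
          (show seg u ⊆ seg u ∪ (H u ∪ H (σ u)) from fun x hx => Or.inl hx)
        exact (c1.trans c3).trans c2.symm
    · rintro _ ⟨u, hu, rfl⟩ _ ⟨v, hv, rfl⟩ hne
      have huv : u ≠ v := by
        rintro rfl
        exact hne rfl
      obtain ⟨k1, k2, k3, k4⟩ := hF1 u hu
      obtain ⟨l1, l2, l3, l4⟩ := hF1 v hv
      have hu' := hFK hu
      have hv' := hFK hv
      obtain ⟨g1, g2⟩ := hF2 u hu v hv huv
      have g3 := hF3 u hu v hv
      have g4 := (hF3 v hv u hu).symm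
      refine ⟨?_, hτi _ hu' _ hv' huv, hτi _ hu' _ l1 g3, hτi _ k1 _ hv' g4, hτi _ k1 _ l1 g2⟩
      have hHd : ∀ a ∈ K, ∀ b ∈ K, a ≠ b → ∀ x, x ∈ H a → x ∉ H b := by
        intro a ha b hb hab x hxa hxb
        exact hab (hHu a ha.1 b hb.1 x hxa hxb)
      rw [Set.disjoint_left]
      rintro x (hx | hx | hx) (hy | hy | hy)
      · exact Set.disjoint_left.1 g1 hx hy
      · exact hHB _ _ hy (k3 hx)
      · exact hHB _ _ hy (k3 hx)
      · exact hHB _ _ hx (l3 hy)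
      · exact hHd _ hu' _ hv' huv x hx hy
      · exact hHd _ hu' _ l1 g3 x hx hy
      · exact hHB _ _ hx (l3 hy)
      · exact hHd _ k1 _ hv' g4 x hx hy
      · exact hHd _ k1 _ l1 g2 x hx hy
    · rintro t ⟨ht, -⟩
      obtain ⟨w, hw, -, hwt⟩ := hanchor r hrB t ht (hT t (hUT t ht))
      have hwK : w ∈ K := ⟨hw, t, hwt⟩
      have hwτ : τ w = t := htokt w hw _ _ (hτ w hwK) hwt
      rcases hF4 w hwK with h | ⟨u, hu, rfl⟩
      · exact ⟨_, ⟨w, h, rfl⟩, Or.inl hwτ⟩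
      · exact ⟨_, ⟨u, hu, rfl⟩, Or.inr hwτ⟩
  intro t ht t' ht'
  by_contra hcon
  have h1 := hT t (hUT t ht)
  exact hr ⟨fun h => hUD t ht (hDa _ _ h1 h), t, ht, t', ht', hcon, h1, hT t' (hUT t' ht')⟩

theorem near {G H : SimpleGraph V} (hHG : H ≤ G) (r : V) (T : Set V)
    (hT : ∀ t ∈ T, H.Reachable r t) :
    ∃ T1 ⊆ T, ∃ P, (T \ T1).Subsingleton ∧ RJ G T1 P ∧
      ∀ p ∈ P, ∀ e ∈ p.2.2.edges, e ∈ H.edgeSet := by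
  classical
  have hpar : ∀ x, ∃ y, (x ≠ y → H.Adj x y ∧ H.dist r y + 1 = H.dist r x) ∧
      (H.Reachable r x → x ≠ r → x ≠ y ∧ H.Reachable r y) := by
    intro x
    by_cases hx : H.Reachable r x ∧ x ≠ r
    · obtain ⟨hx, hxr⟩ := hx
      obtain ⟨w, hw⟩ := hx.symm.exists_walk_length_eq_dist
      cases w with
      | nil => exact absurd rfl hxr
      | @cons _ y _ hadj w =>
        refine ⟨y, ?_, fun _ _ => ⟨hadj.ne, w.reachable.symm⟩⟩
        intro _
        refine ⟨hadj, ?_⟩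
        have l1 := H.dist_le w
        rw [Walk.length_cons] at hw
        have l2 : H.dist x r ≤ H.dist y r + 1 := by
          obtain ⟨w', hw'⟩ := w.reachable.exists_walk_length_eq_dist
          have := H.dist_le (Walk.cons hadj w')
          rw [Walk.length_cons] at this
          omega
        rw [H.dist_comm (u := r), H.dist_comm (u := r)]
        omega
    · exact ⟨x, fun h => absurd rfl h, fun h h' => absurd ⟨h, h'⟩ hx⟩
  choose par hp hp' using hpar
  have hanc : ∀ k, ∀ x, H.Reachable r x → H.dist r x = k → Anc par r x := by
    intro k
    induction k with
    | zero =>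
      intro x hx hk
      rw [hx.dist_eq_zero_iff] at hk
      rw [hk]
      exact Anc.refl _ _
    | succ k ih =>
      intro x hx hk
      have hxr : x ≠ r := by
        rintro rfl
        simp at hk
      obtain ⟨h1, h2⟩ := hp' x hx hxr
      exact (ih (par x) h2 (by have := (hp x h1).2; omega)).trans (Anc.par x)
  have hd : ∀ x, x ≠ par x → H.dist r (par x) + 1 = H.dist r x := fun x hx => (hp x hx).2
  obtain ⟨Q, hV, hQ⟩ := tree (G := G) (par := par) (fun x hx => hHG (hp x hx).1)
    (d := fun x => H.dist r x) hd r T (fun t ht => hanc _ t (hT t ht) rfl)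
  have hw : ∀ q : Q, ∃ w : G.Walk q.1.1 q.1.2.1,
      ∀ e ∈ w.edges, ∃ x ∈ q.1.2.2, x ≠ par x ∧ e = s(x, par x) :=
    fun q => (hV.1 q.1 q.2).2.2.2.2
  choose w hw using hw
  refine ⟨Cov Q, ?_, Set.range (fun q : Q => ⟨q.1.1, q.1.2.1, w q⟩), hQ, ⟨?_, ?_, ?_⟩, ?_⟩
  · rintro t ⟨q, hq, rfl | rfl⟩
    · exact (hV.1 q hq).2.1
    · exact (hV.1 q hq).2.2.1
  · rintro _ ⟨q, rfl⟩
    exact ⟨(hV.1 q.1 q.2).1, ⟨q.1, q.2, Or.inl rfl⟩, ⟨q.1, q.2, Or.inr rfl⟩⟩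
  · rintro _ ⟨q, rfl⟩ _ ⟨q', rfl⟩ hne
    have hqq : q.1 ≠ q'.1 := by
      intro h
      have := Subtype.ext h
      subst this
      exact hne rfl
    obtain ⟨a, b⟩ := hV.2 q.1 q.2 q'.1 q'.2 hqq
    refine ⟨?_, b⟩
    intro e he he'
    obtain ⟨x, hx, hxp, rfl⟩ := hw q e he
    obtain ⟨y, hy, hyp, hxy⟩ := hw q' _ he'
    have hxy' : x = y := by
      rw [Sym2.eq_iff] at hxy
      rcases hxy with h | ⟨h1, h2⟩
      · exact h.1
      · have l1 := hd x hxp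
        have l2 := hd y hyp
        rw [h2] at l1
        rw [← h1] at l2
        omega
    subst hxy'
    exact Set.disjoint_left.1 a hx hy
  · rintro t ⟨q, hq, h⟩
    exact ⟨_, ⟨⟨q, hq⟩, rfl⟩, h⟩
  · rintro _ ⟨q, rfl⟩ e he
    obtain ⟨x, hx, hxp, rfl⟩ := hw q e he
    exact (hp x hxp).1

theorem near_even {G H : SimpleGraph V} (hHG : H ≤ G) (r : V) (T : Set V)
    (hT : ∀ t ∈ T, H.Reachable r t) (hfin : T.Finite) (hev : Even T.ncard) :
    ∃ P, RJ G T P ∧ ∀ p ∈ P, ∀ e ∈ p.2.2.edges, e ∈ H.edgeSet := by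
  obtain ⟨T1, hT1, P, hs, hP, hPe⟩ := near hHG r T hT
  have h1 := hP.even (hfin.subset hT1)
  have h2 := Set.ncard_sdiff_add_ncard_of_subset hT1 hfin
  rcases hs.eq_empty_or_singleton with h | ⟨v, h⟩
  · have : T = T1 := (Set.sdiff_eq_empty.1 h).antisymm hT1
    subst this
    exact ⟨P, hP, hPe⟩
  · rw [h, Set.ncard_singleton] at h2
    exfalso
    grind

theorem modify {G : SimpleGraph V} (hG : G.Connected) {T X : Set V}
    {P : Set (Σ u : V, Σ v : V, G.Walk u v)} (hP : RJ G T P) (hX : X.Finite)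
    (hev : Even X.ncard) : ∃ P', RJ G (symmDiff T X) P' := by
  classical
  obtain ⟨r⟩ := hG.nonempty
  have hw : ∀ x, ∃ _ : G.Walk r x, True := fun x => ⟨(hG.preconnected r x).some, trivial⟩
  choose w _ using hw
  let W : Set (Sym2 V) := ⋃ x ∈ X, {e | e ∈ (w x).edges}
  have hWfin : W.Finite := hX.biUnion fun x _ => List.finite_toSet _
  let P0 : Set (Σ u : V, Σ v : V, G.Walk u v) :=
    {p | p ∈ P ∧ ((∃ e ∈ W, e ∈ p.2.2.edges) ∨ p.1 ∈ X ∨ p.2.1 ∈ X)}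
  obtain ⟨h1, h2, h3⟩ := hP
  have hP0fin : P0.Finite := by
    have f1 : (⋃ e ∈ W, {p | p ∈ P ∧ e ∈ p.2.2.edges}).Finite := by
      refine hWfin.biUnion fun e _ => Set.Subsingleton.finite ?_
      rintro p ⟨hp, hpe⟩ q ⟨hq, hqe⟩
      by_contra hne
      exact (h2 p hp q hq hne).1 e hpe hqe
    have f2 : (⋃ x ∈ X, {p | p ∈ P ∧ (p.1 = x ∨ p.2.1 = x)}).Finite := by
      refine hX.biUnion fun x _ => Set.Subsingleton.finite ?_
      rintro p ⟨hp, hpe⟩ q ⟨hq, hqe⟩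
      by_contra hne
      obtain ⟨-, a, b, c, d⟩ := h2 p hp q hq hne
      rcases hpe with hpe | hpe <;> rcases hqe with hqe | hqe
      · exact a (hpe.trans hqe.symm)
      · exact b (hpe.trans hqe.symm)
      · exact c (hpe.trans hqe.symm)
      · exact d (hpe.trans hqe.symm)
    refine (f1.union f2).subset ?_
    rintro p ⟨hp, ⟨e, he, he'⟩ | hx | hx⟩
    · exact Or.inl (Set.mem_biUnion (t := fun e => {p | p ∈ P ∧ e ∈ p.2.2.edges}) he ⟨hp, he'⟩)
    · exact Or.inr (Set.mem_biUnion (t := fun x => {p | p ∈ P ∧ (p.1 = x ∨ p.2.1 = x)}) hx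
        ⟨hp, Or.inl rfl⟩)
    · exact Or.inr (Set.mem_biUnion (t := fun x => {p | p ∈ P ∧ (p.1 = x ∨ p.2.1 = x)}) hx
        ⟨hp, Or.inr rfl⟩)
  let T0 : Set V := {t | ∃ p ∈ P0, p.1 = t ∨ p.2.1 = t}
  have hT0fin : T0.Finite := by
    refine ((hP0fin.image fun p => p.1).union (hP0fin.image fun p => p.2.1)).subset ?_
    rintro t ⟨p, hp, h | h⟩
    · exact Or.inl ⟨p, hp, h⟩
    · exact Or.inr ⟨p, hp, h⟩
  have hT0T : T0 ⊆ T := by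
    rintro t ⟨p, hp, rfl | rfl⟩
    · exact (h1 p hp.1).2.1
    · exact (h1 p hp.1).2.2
  have hRJ0 : RJ G T0 P0 := by
    refine ⟨fun p hp => ⟨(h1 p hp.1).1, ⟨p, hp, Or.inl rfl⟩, ⟨p, hp, Or.inr rfl⟩⟩,
      fun p hp q hq => h2 p hp.1 q hq.1, fun t ht => ht⟩
  have hY : Even (symmDiff T0 X).ncard := by
    rw [even_symmDiff hT0fin hX]
    exact ⟨fun _ => hev, fun _ => hRJ0.even hT0fin⟩
  let H : SimpleGraph V := SimpleGraph.fromEdgeSet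
    {e | e ∈ G.edgeSet ∧ (e ∈ W ∨ ∃ p ∈ P0, e ∈ p.2.2.edges)}
  have hHe : ∀ e, e ∈ H.edgeSet ↔ e ∈ G.edgeSet ∧ (e ∈ W ∨ ∃ p ∈ P0, e ∈ p.2.2.edges) := by
    intro e
    simp only [H, SimpleGraph.edgeSet_fromEdgeSet, Set.mem_sdiff, Set.mem_ofPred_eq]
    refine ⟨fun h => h.1, fun h => ⟨h, G.not_isDiag_of_mem_edgeSet h.1⟩⟩
  have hHG : H ≤ G := by
    rw [← SimpleGraph.edgeSet_subset_edgeSet]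
    intro e he
    exact ((hHe e).1 he).1
  have hwr : ∀ x ∈ X, ∀ y ∈ (w x).support, H.Reachable r y := by
    intro x hx y hy
    have hy' : ∀ e ∈ (w x).edges, e ∈ H.edgeSet := by
      intro e he
      rw [hHe]
      exact ⟨(w x).edges_subset_edgeSet he,
        Or.inl (Set.mem_biUnion (t := fun x => {e | e ∈ (w x).edges}) hx he)⟩
    refine (((w x).takeUntil y hy).transfer H fun e he => hy' e ?_).reachable
    exact (w x).edges_takeUntil_subset_edges hy he
  have hpr : ∀ p ∈ P0, ∀ y ∈ p.2.2.support, H.Reachable p.1 y := by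
    intro p hp y hy
    refine ((p.2.2.takeUntil y hy).transfer H fun e he => ?_).reachable
    have he' := p.2.2.edges_takeUntil_subset_edges hy he
    rw [hHe]
    exact ⟨p.2.2.edges_subset_edgeSet he', Or.inr ⟨p, hp, he'⟩⟩
  have hXr : ∀ x ∈ X, H.Reachable r x := fun x hx => hwr x hx x (Walk.end_mem_support _)
  have hp1 : ∀ p ∈ P0, H.Reachable r p.1 := by
    intro p hp
    rcases hp.2 with ⟨e, he, he'⟩ | hx | hx
    · simp only [W, Set.mem_iUnion] at he
      obtain ⟨x, hx, he⟩ := he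
      induction e with
      | _ a b =>
        exact (hwr x hx a ((w x).fst_mem_support_of_mem_edges he)).trans
          (hpr p hp a (p.2.2.fst_mem_support_of_mem_edges he')).symm
    · exact hXr _ hx
    · exact (hXr _ hx).trans (hpr p hp _ (Walk.end_mem_support _)).symm
  have hYr : ∀ y ∈ symmDiff T0 X, H.Reachable r y := by
    rintro y (⟨⟨p, hp, rfl | rfl⟩, -⟩ | ⟨hy, -⟩)
    · exact hp1 p hp
    · exact (hp1 p hp).trans (hpr p hp _ (Walk.end_mem_support _))
    · exact hXr y hy
  obtain ⟨P1, ⟨k1, k2, k3⟩, hP1e⟩ := near_even hHG r _ hYr (hT0fin.symmDiff hX) hY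
  have hun : ∀ p ∈ P, p ∉ P0 → ∀ t, p.1 = t ∨ p.2.1 = t → t ∉ X ∧ t ∉ T0 := by
    intro p hp hp0 t ht
    constructor
    · intro htX
      refine hp0 ⟨hp, Or.inr ?_⟩
      rcases ht with rfl | rfl
      · exact Or.inl htX
      · exact Or.inr htX
    · rintro ⟨q, hq, hqt⟩
      have hne : p ≠ q := by
        rintro rfl
        exact hp0 hq
      obtain ⟨-, a, b, c, d⟩ := h2 p hp q hq.1 hne
      rcases ht with hpe | hpe <;> rcases hqt with hqe | hqe
      · exact a (hpe.trans hqe.symm)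
      · exact b (hpe.trans hqe.symm)
      · exact c (hpe.trans hqe.symm)
      · exact d (hpe.trans hqe.symm)
  have hXT : ∀ t ∈ X, t ∉ T0 → t ∉ T := by
    intro t ht ht0 htT
    obtain ⟨p, hp, hpt⟩ := h3 t htT
    by_cases hp0 : p ∈ P0
    · exact ht0 ⟨p, hp0, hpt⟩
    · exact (hun p hp hp0 t hpt).1 ht
  have hYT : symmDiff T0 X ⊆ symmDiff T X := by
    rintro t (⟨ht, ht'⟩ | ⟨ht, ht'⟩)
    · exact Or.inl ⟨hT0T ht, ht'⟩
    · exact Or.inr ⟨ht, hXT t ht ht'⟩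
  have hcross : ∀ p ∈ P, p ∉ P0 → ∀ q ∈ P1, (∀ e ∈ p.2.2.edges, e ∉ q.2.2.edges) ∧
    p.1 ≠ q.1 ∧ p.1 ≠ q.2.1 ∧ p.2.1 ≠ q.1 ∧ p.2.1 ≠ q.2.1 := by
    intro p hp hp0 q hq
    have hnY : ∀ t, p.1 = t ∨ p.2.1 = t → t ∉ symmDiff T0 X := by
      intro t ht
      obtain ⟨a, b⟩ := hun p hp hp0 t ht
      rintro (h | h)
      · exact b h.1
      · exact a h.1
    obtain ⟨-, y1, y2⟩ := k1 q hq
    refine ⟨?_, fun h => hnY _ (Or.inl h) y1, fun h => hnY _ (Or.inl h) y2,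
      fun h => hnY _ (Or.inr h) y1, fun h => hnY _ (Or.inr h) y2⟩
    intro e he he'
    rcases ((hHe e).1 (hP1e q hq e he')).2 with h | ⟨p', hp', h⟩
    · exact hp0 ⟨hp, Or.inl ⟨e, h, he⟩⟩
    · have hne : p ≠ p' := by
        rintro rfl
        exact hp0 hp'
      exact (h2 p hp p' hp'.1 hne).1 e he h
  refine ⟨(P \ P0) ∪ P1, ?_, ?_, ?_⟩
  · rintro p (⟨hp, hp0⟩ | hp)
    · obtain ⟨a, b, c⟩ := h1 p hp
      exact ⟨a, Or.inl ⟨b, (hun p hp hp0 _ (Or.inl rfl)).1⟩,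
        Or.inl ⟨c, (hun p hp hp0 _ (Or.inr rfl)).1⟩⟩
    · obtain ⟨a, b, c⟩ := k1 p hp
      exact ⟨a, hYT b, hYT c⟩
  · rintro p (⟨hp, hp0⟩ | hp) q (⟨hq, hq0⟩ | hq) hne
    · exact h2 p hp q hq hne
    · exact hcross p hp hp0 q hq
    · obtain ⟨z, a, b, c, d⟩ := hcross q hq hq0 p hp
      exact ⟨fun e he he' => z e he' he, a.symm, c.symm, b.symm, d.symm⟩
    · exact k2 p hp q hq hne
  · intro t ht
    by_cases htY : t ∈ symmDiff T0 X
    · obtain ⟨p, hp, h⟩ := k3 t htY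
      exact ⟨p, Or.inr hp, h⟩
    · rcases ht with ⟨ht, htX⟩ | ⟨ht, htT⟩
      · obtain ⟨p, hp, h⟩ := h3 t ht
        refine ⟨p, Or.inl ⟨hp, fun hp0 => htY (Or.inl ⟨⟨p, hp0, h⟩, htX⟩)⟩, h⟩
      · exact absurd (Or.inr ⟨ht, fun h => htT (hT0T h)⟩) htY

end TJ

/-- If `T △ T'` is finite of odd cardinality and the connected graph `G` has no `T`-join,
then `G` has a `T'`-join. -/
theorem hasTJoin_of_not_hasTJoin_odd_symmDiff {V : Type*} (G : SimpleGraph V)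
    (hG : G.Connected) (T T' : Set V) (hfin : (symmDiff T T').Finite)
    (hodd : Odd (symmDiff T T').ncard) (hT : ¬ G.HasTJoin T) :
    G.HasTJoin T' := by
  obtain ⟨r⟩ := hG.nonempty
  obtain ⟨T1, hT1, P, hs, hP, -⟩ := TJ.near (le_refl G) r T (fun t _ => hG.preconnected r t)
  rcases hs.eq_empty_or_singleton with h | ⟨v, h⟩
  · have : T = T1 := (Set.sdiff_eq_empty.1 h).antisymm hT1
    subst this
    exact absurd hP.hasTJoin hT
  · have e1 : symmDiff T1 T = {v} := by
      rw [Set.symmDiff_def, h, Set.sdiff_eq_empty.2 hT1, Set.empty_union]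
    have e2 : symmDiff T1 T' = symmDiff {v} (symmDiff T T') := by
      rw [← e1, symmDiff_assoc, symmDiff_symmDiff_cancel_left]
    have hX : Even (symmDiff T1 T').ncard := by
      rw [e2, TJ.even_symmDiff (Set.finite_singleton v) hfin, Set.ncard_singleton]
      rw [← Nat.not_even_iff_odd] at hodd
      simp [hodd]
    have hXf : (symmDiff T1 T').Finite := by
      rw [e2]
      exact (Set.finite_singleton v).symmDiff hfin
    obtain ⟨P', hP'⟩ := TJ.modify hG hP hXf hX
    rw [symmDiff_symmDiff_cancel_left] at hP'
    exact hP'.hasTJoin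
end
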